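/- arXiv:1604.04809 — 5 statements merged into one kernel-verified Lean document; each statement's English description precedes it below -/
import Mathlib

section
/- Let s be a Nash equilibrium of a coordination game on a weighted directed graph with bonuses, and suppose a non-empty coalition K has a profitable deviation s' from s. Then there exists a directed simple cycle in the graph all of whose nodes belong to K and all of whose nodes choose one and the same colour in s'. (In particular, every node of K has a predecessor in K that deviates to the same colour as it does.) -/
open scoped Classical

namespace CG

/-- Payoff of node `i` in a coordination game on a weighted directed graph
with adjacency `adj` (an edge `j → i` is `adj j i`), edge weights `w`,
bonuses `β`, under the joint strategy `s`. -/
noncomputable def payoff {V M : Type} [Fintype V] (adj : V → V → Prop)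
    (w : V → V → ℝ) (β : V → M → ℕ) (s : V → M) (i : V) : ℝ :=
  (∑ j ∈ Finset.univ.filter (fun j => adj j i ∧ s j = s i), w j i) + (β i (s i) : ℝ)

/-- A joint strategy assigns to every node a colour from its colour set. -/
def Valid {V M : Type} (C : V → Finset M) (s : V → M) : Prop :=
  ∀ i, s i ∈ C i

/-- `s'` is a profitable deviation of the (non-empty) coalition
`K = {i | s i ≠ s' i}` from `s`. -/
def ProfDev {V M : Type} [Fintype V] (adj : V → V → Prop) (w : V → V → ℝ)
    (β : V → M → ℕ) (C : V → Finset M) (s s' : V → M) : Prop :=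
  Valid C s' ∧ s ≠ s' ∧
    ∀ i, s i ≠ s' i → payoff adj w β s i < payoff adj w β s' i

/-- A profitable deviation of a single player. -/
def UniDev {V M : Type} [Fintype V] (adj : V → V → Prop) (w : V → V → ℝ)
    (β : V → M → ℕ) (C : V → Finset M) (s s' : V → M) : Prop :=
  ProfDev adj w β C s s' ∧ ∃ i, ∀ j, j ≠ i → s j = s' j

/-- A Nash equilibrium: no single player has a profitable deviation. -/
def IsNash {V M : Type} [Fintype V] (adj : V → V → Prop) (w : V → V → ℝ)
    (β : V → M → ℕ) (C : V → Finset M) (s : V → M) : Prop :=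
  Valid C s ∧ ∀ s', ¬ UniDev adj w β C s s'

/-- A strong equilibrium: no coalition has a profitable deviation. -/
def IsStrong {V M : Type} [Fintype V] (adj : V → V → Prop) (w : V → V → ℝ)
    (β : V → M → ℕ) (C : V → Finset M) (s : V → M) : Prop :=
  Valid C s ∧ ∀ s', ¬ ProfDev adj w β C s s'

/-- There is a finite improvement path of length `L` starting at `s`
(each step a profitable single-player deviation) ending in a Nash equilibrium. -/
def ImpPath {V M : Type} [Fintype V] (adj : V → V → Prop) (w : V → V → ℝ)
    (β : V → M → ℕ) (C : V → Finset M) (s : V → M) (L : ℕ) : Prop :=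
  ∃ σ : ℕ → V → M, σ 0 = s ∧
    (∀ t, t < L → UniDev adj w β C (σ t) (σ (t + 1))) ∧
    IsNash adj w β C (σ L)

/-- There is a finite c-improvement path of length `L` starting at `s`
(each step a profitable coalition deviation) ending in a strong equilibrium. -/
def CImpPath {V M : Type} [Fintype V] (adj : V → V → Prop) (w : V → V → ℝ)
    (β : V → M → ℕ) (C : V → Finset M) (s : V → M) (L : ℕ) : Prop :=
  ∃ σ : ℕ → V → M, σ 0 = s ∧
    (∀ t, t < L → ProfDev adj w β C (σ t) (σ (t + 1))) ∧
    IsStrong adj w β C (σ L)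

/-- Adjacency of the simple cycle `1 → 2 → ⋯ → n → 1` on `Fin n`. -/
def cycAdj (n : ℕ) : Fin n → Fin n → Prop :=
  fun i j => (i.val + 1) % n = j.val

/-- Any profitable coalition deviation `s'` from a Nash equilibrium `s` of a
coordination game on a weighted directed graph with bonuses contains a
unicoloured directed simple cycle: in particular every deviating node has a
deviating predecessor switching to the same colour, and there is a directed
simple cycle all of whose nodes deviate and choose the same colour in `s'`. -/
theorem nash_coalition_deviation_has_unicoloured_cycle
    {V M : Type} [Fintype V]
    (adj : V → V → Prop) (hloop : ∀ i, ¬ adj i i)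
    (w : V → V → ℝ) (hw : ∀ i j, adj i j → 0 ≤ w i j)
    (β : V → M → ℕ) (C : V → Finset M) (hC : ∀ i, (C i).Nonempty)
    (s s' : V → M)
    (hNash : IsNash adj w β C s)
    (hdev : ProfDev adj w β C s s') :
    (∀ i, s i ≠ s' i → ∃ j, s j ≠ s' j ∧ adj j i ∧ s' j = s' i) ∧
    ∃ (L : ℕ) (v : ℕ → V), 2 ≤ L ∧
      (∀ t t', t < L → t' < L → v t = v t' → t = t') ∧
      (∀ t, t < L → adj (v t) (v ((t + 1) % L))) ∧
      (∀ t, t < L → s (v t) ≠ s' (v t)) ∧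
      (∀ t, t < L → s' (v t) = s' (v 0)) := by
  have hpred : ∀ i, s i ≠ s' i → ∃ j, s j ≠ s' j ∧ adj j i ∧ s' j = s' i := by
    intro i hi
    by_contra hno
    push Not at hno
    have huo : ∀ j, j ≠ i → Function.update s i (s' i) j = s j :=
      fun j hj => Function.update_of_ne hj _ _
    have hui : Function.update s i (s' i) i = s' i := Function.update_self _ _ _
    generalize Function.update s i (s' i) = u at huo hui
    have hle : payoff adj w β s' i ≤ payoff adj w β u i := by
      unfold payoff
      rw [hui]
      refine add_le_add ?_ le_rfl
      apply Finset.sum_le_sum_of_subset_of_nonneg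
      · intro j hj
        simp only [Finset.mem_filter, Finset.mem_univ, true_and] at hj ⊢
        have hji : j ≠ i := fun h => hloop i (h ▸ hj.1)
        refine ⟨hj.1, ?_⟩
        rw [huo j hji]
        by_contra hne
        exact hno j (fun h => hne (h.trans hj.2)) hj.1 hj.2
      · intro j hj _
        simp only [Finset.mem_filter, Finset.mem_univ, true_and] at hj
        exact hw j i hj.1
    refine hNash.2 u ⟨⟨?_, ?_, ?_⟩, i, fun j hj => (huo j hj).symm⟩
    · intro j
      by_cases h : j = i
      · subst h; rw [hui]; exact hdev.1 j
      · rw [huo j h]; exact hNash.1 j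
    · intro h
      exact hi (by rw [← hui, ← h])
    · intro j hj
      by_cases h : j = i
      · subst h; exact lt_of_lt_of_le (hdev.2.2 j hi) hle
      · exact absurd (huo j h).symm hj
  refine ⟨hpred, ?_⟩
  have hf : ∃ f : V → V, ∀ i, s i ≠ s' i → s (f i) ≠ s' (f i) ∧ adj (f i) i ∧ s' (f i) = s' i := by
    have : ∀ i, ∃ j, s i ≠ s' i → s j ≠ s' j ∧ adj j i ∧ s' j = s' i := by
      intro i
      by_cases h : s i ≠ s' i
      · obtain ⟨j, hj⟩ := hpred i h
        exact ⟨j, fun _ => hj⟩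
      · exact ⟨i, fun h' => absurd h' h⟩
    choose f hf using this
    exact ⟨f, hf⟩
  obtain ⟨f, hf⟩ := hf
  obtain ⟨i0, hi0⟩ := Function.ne_iff.mp hdev.2.1
  have hit : ∀ (y : V), s y ≠ s' y → ∀ n, s (f^[n] y) ≠ s' (f^[n] y) ∧ s' (f^[n] y) = s' y := by
    intro y hy n
    induction n with
    | zero => exact ⟨hy, rfl⟩
    | succ n ih =>
      rw [Function.iterate_succ_apply']
      have := hf _ ih.1
      exact ⟨this.1, this.2.2.trans ih.2⟩
  have hper : ∃ x, s x ≠ s' x ∧ x ∈ Function.periodicPts f := by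
    obtain ⟨m, n, hmn, he⟩ := Finite.exists_ne_map_eq_of_infinite (fun n : ℕ => f^[n] i0)
    wlog hlt : m < n generalizing m n
    · exact this n m hmn.symm he.symm (by omega)
    refine ⟨f^[m] i0, (hit i0 hi0 m).1, n - m, by omega, ?_⟩
    change f^[n - m] (f^[m] i0) = f^[m] i0
    rw [← Function.iterate_add_apply, Nat.sub_add_cancel hlt.le]
    exact he.symm
  obtain ⟨x, hx, hp⟩ := hper
  have hpos := Function.minimalPeriod_pos_of_mem_periodicPts hp
  have hLx : f^[Function.minimalPeriod f x] x = x := Function.iterate_minimalPeriod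
  have hinj := Function.iterate_injOn_Iio_minimalPeriod (f := f) (x := x)
  generalize Function.minimalPeriod f x = L at hpos hLx hinj
  have hL2 : 2 ≤ L := by
    by_contra h
    have h1 : L = 1 := by omega
    subst h1
    have h2 := (hf x hx).2.1
    have h3 : f x = x := hLx
    rw [h3] at h2
    exact hloop x h2
  refine ⟨L, fun t => f^[L - 1 - t] x, hL2, ?_, ?_, fun t _ => (hit x hx _).1,
    fun t _ => (hit x hx _).2.trans (hit x hx _).2.symm⟩
  · intro t t' ht ht' h
    have := hinj (show L - 1 - t ∈ Set.Iio L by simp only [Set.mem_Iio]; omega)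
      (show L - 1 - t' ∈ Set.Iio L by simp only [Set.mem_Iio]; omega) h
    omega
  · intro t ht
    have key : ∀ n, adj (f^[n + 1] x) (f^[n] x) := by
      intro n
      rw [Function.iterate_succ_apply']
      exact (hf _ (hit x hx n).1).2.1
    by_cases h : t + 1 = L
    · have h2 := key (L - 1)
      rw [Nat.sub_add_cancel hpos, hLx] at h2
      have e1 : L - 1 - t = 0 := by omega
      simp only [h, Nat.mod_self, e1, Nat.sub_zero]
      exact h2
    · have h2 := key (L - 1 - (t + 1))
      have e1 : L - 1 - (t + 1) + 1 = L - 1 - t := by omega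
      rw [e1] at h2
      simp only [Nat.mod_eq_of_lt (show t + 1 < L by omega)]
      exact h2

end CG
end

section
/- There is a constant c (independent of the game) such that every coordination game with bonuses on an unweighted simple cycle on n nodes admits, from every joint strategy, a finite c-improvement path of length at most c·n (hence ending in a strong equilibrium). -/
open scoped Classical

namespace CG

def nu (n : ℕ) (hn : 2 ≤ n) (t : ℕ) : Fin n := ⟨t % n, Nat.mod_lt _ (by omega)⟩

def prd (n : ℕ) (hn : 2 ≤ n) (i : Fin n) : Fin n := nu n hn (i.val + (n - 1))

lemma nu_val (n : ℕ) (hn : 2 ≤ n) (i : Fin n) : nu n hn i.val = i := by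
  apply Fin.ext
  simp [nu, Nat.mod_eq_of_lt i.isLt]

lemma nu_add (n : ℕ) (hn : 2 ≤ n) (t : ℕ) : nu n hn (t + n) = nu n hn t := by
  apply Fin.ext
  simp [nu]

lemma prd_nu (n : ℕ) (hn : 2 ≤ n) (t : ℕ) : prd n hn (nu n hn (t + 1)) = nu n hn t := by
  apply Fin.ext
  simp only [prd, nu, Nat.mod_add_mod]
  rw [show t + 1 + (n - 1) = t + n by omega, Nat.add_mod_right]

lemma cyc_iff (n : ℕ) (hn : 2 ≤ n) (j i : Fin n) : cycAdj n j i ↔ j = prd n hn i := by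
  constructor
  · intro h
    have : i = nu n hn (j.val + 1) := Fin.ext h.symm
    rw [this, prd_nu, nu_val]
  · rintro rfl
    simp only [cycAdj, prd, nu, Nat.mod_add_mod]
    rw [show i.val + (n - 1) + 1 = i.val + n by omega, Nat.add_mod_right,
      Nat.mod_eq_of_lt i.isLt]

lemma nu_ne (n : ℕ) (hn : 2 ≤ n) (t k : ℕ) (h0 : 0 < k) (hk : k < n) :
    nu n hn t ≠ nu n hn (t + k) := by
  intro h
  have h1 : t % n = (t + k) % n := congrArg Fin.val h
  have h2 : t + 0 ≡ t + k [MOD n] := h1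
  have h3 : 0 % n = k % n := Nat.ModEq.add_left_cancel' t h2
  rw [Nat.mod_eq_of_lt hk, Nat.zero_mod] at h3
  omega

/-- local payoff -/
noncomputable def q {M : Type} (b : M → ℕ) (x y : M) : ℕ := (if x = y then 1 else 0) + b y

lemma payoff_eq {n : ℕ} (hn : 2 ≤ n) {M : Type} (β : Fin n → M → ℕ) (s : Fin n → M) (i : Fin n) :
    payoff (cycAdj n) (fun _ _ => 1) β s i = (q (β i) (s (prd n hn i)) (s i) : ℕ) := by
  unfold payoff q
  simp only [cyc_iff n hn]
  by_cases h : s (prd n hn i) = s i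
  · have : (Finset.univ.filter (fun j => j = prd n hn i ∧ s j = s i)) = {prd n hn i} := by
      ext j
      simp only [Finset.mem_filter, Finset.mem_univ, true_and, Finset.mem_singleton]
      constructor
      · exact fun h => h.1
      · rintro rfl
        exact ⟨rfl, h⟩
    rw [this]
    simp [h]
  · have : (Finset.univ.filter (fun j => j = prd n hn i ∧ s j = s i)) = ∅ := by
      ext j
      simp only [Finset.mem_filter, Finset.mem_univ, true_and, Finset.notMem_empty, iff_false]
      rintro ⟨rfl, h'⟩
      exact h h'
    rw [this]
    simp [h]

def IsA {M : Type} (b : M → ℕ) (C : Finset M) (y : M) : Prop := y ∈ C ∧ ∀ z ∈ C, b z ≤ b y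

noncomputable def F {M : Type} (b : M → ℕ) (C : Finset M) (a x z : M) : M :=
  if IsA b C x then x else if ∀ y ∈ C, q b x y ≤ q b x z then z else a

section
variable {M : Type} {b : M → ℕ} {C : Finset M} {a : M}

lemma F_mem (ha : IsA b C a) (x z : M) (hz : z ∈ C) : F b C a x z ∈ C := by
  unfold F
  split_ifs with h1 h2
  · exact h1.1
  · exact hz
  · exact ha.1

lemma F_best (ha : IsA b C a) (x z : M) : ∀ y ∈ C, q b x y ≤ q b x (F b C a x z) := by
  intro y hy
  unfold F
  split_ifs with h1 h2
  · have := h1.2 y hy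
    unfold q
    split_ifs <;> simp_all
    omega
  · exact h2 y hy
  · have h3 := ha.2 y hy
    by_cases hxy : x = y
    · subst hxy
      have : b x < b a := by
        by_contra hc
        exact h1 ⟨hy, fun z hz => (ha.2 z hz).trans (not_lt.mp hc)⟩
      unfold q
      split_ifs <;> omega
    · unfold q
      split_ifs
      omega
      omega

lemma F_imp (ha : IsA b C a) (x z : M) (hz : z ∈ C) :
    F b C a x z = z ∨ q b x z < q b x (F b C a x z) := by
  have hb := F_best ha x z
  by_cases h1 : IsA b C x
  · have hF : F b C a x z = x := by simp [F, h1]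
    rw [hF]
    by_cases hxz : x = z
    · exact Or.inl hxz
    · right
      have := h1.2 z hz
      simp only [q, hxz, if_false, if_true]
      omega
  · by_cases h2 : ∀ y ∈ C, q b x y ≤ q b x z
    · left
      unfold F
      rw [if_neg h1, if_pos h2]
    · right
      push Not at h2
      obtain ⟨y, hy, h⟩ := h2
      exact h.trans_le (hb y hy)

lemma F_idem (ha : IsA b C a) (x z : M) (hz : z ∈ C) :
    F b C a x (F b C a x z) = F b C a x z := by
  have hm := F_mem ha x z hz
  rcases F_imp ha x _ hm with h | h
  · exact h
  · exact absurd (F_best ha x z _ (F_mem ha x _ hm)) (not_le.mpr h)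

lemma F_A (ha : IsA b C a) (x z : M) : F b C a x z = z ∨ IsA b C (F b C a x z) := by
  unfold F
  split_ifs with h1 h2
  · exact Or.inr h1
  · exact Or.inl rfl
  · exact Or.inr ha

lemma F_copy (x z : M) (hz : IsA b C z) : F b C a x z = z ∨ F b C a x z = x := by
  unfold F
  split_ifs with h1 h2
  · exact Or.inr rfl
  · exact Or.inl rfl
  · exfalso
    apply h2
    intro y hy
    have h3 := hz.2 y hy
    by_cases hxy : x = y
    · subst hxy
      have : b x < b z := by
        by_contra hc
        exact h1 ⟨hy, fun w hw => (hz.2 w hw).trans (not_lt.mp hc)⟩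
      unfold q
      split_ifs <;> omega
    · unfold q
      split_ifs
      omega
      omega
end

section
variable {n : ℕ} (hn : 2 ≤ n) {M : Type} (β : Fin n → M → ℕ) (C : Fin n → Finset M)
  (a : Fin n → M)

noncomputable def step (i : Fin n) (s : Fin n → M) : Fin n → M :=
  Function.update s i (F (β i) (C i) (a i) (s (prd n hn i)) (s i))

noncomputable def St (s : Fin n → M) : ℕ → Fin n → M
  | 0 => s
  | t + 1 => step hn β C a (nu n hn t) (St s t)

noncomputable def col (s : Fin n → M) (t : ℕ) : M := St hn β C a s (t + 1) (nu n hn t)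

variable (ha : ∀ i, IsA (β i) (C i) (a i)) (s : Fin n → M) (hs : Valid C s)

include ha in
lemma step_valid (i : Fin n) (s : Fin n → M) (hs : Valid C s) : Valid C (step hn β C a i s) := by
  intro j
  unfold step
  by_cases h : j = i
  · subst h
    simpa using F_mem (ha j) _ _ (hs j)
  · simpa [h] using hs j

lemma prd_ne (i : Fin n) : prd n hn i ≠ i := by
  intro h
  have h1 := nu_ne n hn i.val (n - 1) (by omega) (by omega)
  rw [nu_val] at h1
  exact h1 h.symm

include ha in
lemma step_dev (i : Fin n) (s : Fin n → M) (hs : Valid C s) :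
    step hn β C a i s = s ∨
      ProfDev (cycAdj n) (fun _ _ => 1) β C s (step hn β C a i s) := by
  rcases F_imp (ha i) (s (prd n hn i)) (s i) (hs i) with h | h
  · left
    unfold step
    rw [h, Function.update_eq_self]
  · by_cases he : step hn β C a i s = s
    · exact Or.inl he
    · right
      refine ⟨step_valid hn β C a ha i s hs, fun h' => he h'.symm, ?_⟩
      intro j hj
      have hji : j = i := by
        by_contra hne
        exact hj (by simp [step, hne])
      subst hji
      rw [payoff_eq hn, payoff_eq hn]
      have e1 : step hn β C a j s (prd n hn j) = s (prd n hn j) := by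
        simp [step, prd_ne hn j]
      have e2 : step hn β C a j s j = F (β j) (C j) (a j) (s (prd n hn j)) (s j) := by
        simp [step]
      rw [e1, e2]
      exact_mod_cast h

include ha hs in
lemma St_valid (t : ℕ) : Valid C (St hn β C a s t) := by
  induction t with
  | zero => exact hs
  | succ t ih => exact step_valid hn β C a ha _ _ ih

lemma St_stay (t k : ℕ) (hk : k < n) :
    St hn β C a s (t + 1 + k) (nu n hn t) = col hn β C a s t := by
  induction k with
  | zero => rfl
  | succ k ih =>
    rw [← ih (by omega)]
    have := nu_ne n hn t (k + 1) (by omega) hk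
    rw [show t + (k + 1) = t + 1 + k by omega] at this
    rw [show t + 1 + (k + 1) = (t + 1 + k) + 1 by omega]
    simp only [St, step]
    rw [Function.update_of_ne this]

lemma col_eq (t : ℕ) : col hn β C a s (t + 1) =
    F (β (nu n hn (t + 1))) (C (nu n hn (t + 1))) (a (nu n hn (t + 1))) (col hn β C a s t)
      (St hn β C a s (t + 1) (nu n hn (t + 1))) := by
  have h : col hn β C a s (t + 1) = step hn β C a (nu n hn (t + 1)) (St hn β C a s (t + 1))
    (nu n hn (t + 1)) := rfl
  rw [h]
  simp only [step, Function.update_self]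
  rw [prd_nu]
  rfl

lemma col_rec (t : ℕ) : col hn β C a s (t + n) =
    F (β (nu n hn t)) (C (nu n hn t)) (a (nu n hn t)) (col hn β C a s (t + n - 1))
      (col hn β C a s t) := by
  have h := col_eq hn β C a s (t + n - 1)
  rw [show t + n - 1 + 1 = t + n by omega, nu_add] at h
  rw [h]
  have h2 := St_stay hn β C a s t (n - 1) (by omega)
  rw [show t + 1 + (n - 1) = t + n by omega] at h2
  rw [h2]

include ha hs in
lemma stable_succ (t : ℕ) (h : col hn β C a s (t + n) = col hn β C a s t) :
    col hn β C a s (t + 1 + n) = col hn β C a s (t + 1) := by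
  rw [col_rec, show t + 1 + n - 1 = t + n by omega, h, col_eq]
  exact F_idem (ha _) _ _ (St_valid hn β C a ha s hs _ _)

include ha hs in
lemma stable_le (t k : ℕ) (h : col hn β C a s (t + n) = col hn β C a s t) :
    col hn β C a s (t + k + n) = col hn β C a s (t + k) := by
  induction k with
  | zero => exact h
  | succ k ih => exact stable_succ hn β C a ha s hs (t + k) ih

include ha hs in
lemma stable : col hn β C a s (2 * n - 1 + n) = col hn β C a s (2 * n - 1) := by
  by_contra hc
  have hall : ∀ t, t ≤ 2 * n - 1 → col hn β C a s (t + n) ≠ col hn β C a s t := by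
    intro t ht h
    apply hc
    have := stable_le hn β C a ha s hs t (2 * n - 1 - t) h
    rwa [show t + (2 * n - 1 - t) = 2 * n - 1 by omega] at this
  have hA : ∀ t, t < n → IsA (β (nu n hn t)) (C (nu n hn t)) (col hn β C a s (t + n)) := by
    intro t ht
    have h1 := hall t (by omega)
    rw [col_rec] at h1 ⊢
    exact (F_A (ha _) _ _).resolve_left h1
  have hcopy : ∀ t, t < n → col hn β C a s (t + n + n) = col hn β C a s (t + n + n - 1) := by
    intro t ht
    have h1 := hall (t + n) (by omega)
    rw [col_rec] at h1 ⊢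
    refine (F_copy _ _ ?_).resolve_left h1
    rw [nu_add]
    exact hA t ht
  have hconst : ∀ k, k ≤ n → col hn β C a s (2 * n - 1 + k) = col hn β C a s (2 * n - 1) := by
    intro k
    induction k with
    | zero => intro _; rfl
    | succ k ih =>
      intro hk
      rw [← ih (by omega)]
      have := hcopy k (by omega)
      rwa [show k + n + n = 2 * n - 1 + (k + 1) by omega,
        show 2 * n - 1 + (k + 1) - 1 = 2 * n - 1 + k by omega] at this
  exact hc (hconst n le_rfl)

include ha hs in
lemma final_best (i : Fin n) : ∀ y ∈ C i,
    q (β i) (St hn β C a s (3 * n) (prd n hn i)) y ≤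
      q (β i) (St hn β C a s (3 * n) (prd n hn i)) (St hn β C a s (3 * n) i) := by
  have hst := stable hn β C a ha s hs
  have hi := i.isLt
  have e1 : St hn β C a s (3 * n) i = col hn β C a s (2 * n - 1 + i.val + 1) := by
    have h := St_stay hn β C a s (2 * n - 1 + i.val + 1) (n - 1 - i.val) (by omega)
    rw [← h, show 2 * n - 1 + i.val + 1 + 1 + (n - 1 - i.val) = 3 * n by omega,
      show 2 * n - 1 + i.val + 1 = i.val + n + n by omega, nu_add, nu_add, nu_val]
  have e0 : nu n hn (2 * n - 1 + i.val + 1) = i := by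
    rw [show 2 * n - 1 + i.val + 1 = i.val + n + n by omega, nu_add, nu_add, nu_val]
  have ep : prd n hn i = nu n hn (2 * n - 1 + i.val) := by
    rw [← prd_nu, e0]
  have e2 : St hn β C a s (3 * n) (prd n hn i) = col hn β C a s (2 * n - 1 + i.val) := by
    rw [ep]
    by_cases h0 : i.val = 0
    · have h := St_stay hn β C a s (2 * n - 1 + n) 0 (by omega)
      rw [show 2 * n - 1 + n + 1 + 0 = 3 * n by omega, nu_add, hst] at h
      rw [h0]
      exact h
    · have h := St_stay hn β C a s (2 * n - 1 + i.val) (n - i.val) (by omega)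
      rwa [show 2 * n - 1 + i.val + 1 + (n - i.val) = 3 * n by omega] at h
  rw [e1, e2, col_eq, e0]
  exact F_best (ha i) _ _
end

lemma prepend {V M : Type} [Fintype V] (adj : V → V → Prop) (w : V → V → ℝ)
    (β : V → M → ℕ) (C : V → Finset M) (s s' : V → M) (L : ℕ)
    (h : ProfDev adj w β C s s') (hp : CImpPath adj w β C s' L) :
    CImpPath adj w β C s (L + 1) := by
  obtain ⟨σ, h0, h1, h2⟩ := hp
  refine ⟨fun t => Nat.casesOn t s σ, rfl, ?_, h2⟩
  intro t ht
  cases t with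
  | zero =>
    show ProfDev adj w β C s (σ 0)
    rw [h0]
    exact h
  | succ t => exact h1 t (by omega)

lemma nash_final {n : ℕ} (hn : 2 ≤ n) {M : Type} (β : Fin n → M → ℕ) (C : Fin n → Finset M)
    (a : Fin n → M) (ha : ∀ i, IsA (β i) (C i) (a i)) (s : Fin n → M) (hs : Valid C s)
    (hb : ∀ i, ∀ y ∈ C i, q (β i) (s (prd n hn i)) y ≤ q (β i) (s (prd n hn i)) (s i)) :
    ∃ L, L ≤ 1 ∧ CImpPath (cycAdj n) (fun _ _ => 1) β C s L := by
  by_cases hS : IsStrong (cycAdj n) (fun _ _ => 1) β C s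
  · exact ⟨0, by omega, fun _ => s, rfl, fun t ht => absurd ht (by omega), hS⟩
  have : ∃ s', ProfDev (cycAdj n) (fun _ _ => 1) β C s s' := by
    by_contra hc
    push Not at hc
    exact hS ⟨hs, hc⟩
  obtain ⟨s', hd⟩ := this
  have hlt : ∀ i, s i ≠ s' i →
      q (β i) (s (prd n hn i)) (s i) < q (β i) (s' (prd n hn i)) (s' i) := by
    intro i hi
    have := hd.2.2 i hi
    rw [payoff_eq hn, payoff_eq hn] at this
    exact_mod_cast this
  have hprop : ∀ i, s (prd n hn i) = s' (prd n hn i) → s i = s' i := by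
    intro i h
    by_contra hi
    have h1 := hlt i hi
    rw [← h] at h1
    exact absurd (hb i _ (hd.1 i)) (not_le.mpr h1)
  have hne : ∀ i, s i ≠ s' i := by
    intro i hi
    have hk : ∀ k, s (nu n hn (i.val + k)) = s' (nu n hn (i.val + k)) := by
      intro k
      induction k with
      | zero => simpa [nu_val] using hi
      | succ k ih =>
        apply hprop
        rw [← add_assoc, prd_nu]
        exact ih
    apply hd.2.1
    funext j
    have := hk (j.val + n - i.val)
    have hi' := i.isLt
    rwa [show i.val + (j.val + n - i.val) = j.val + n by omega, nu_add, nu_val] at this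
  refine ⟨1, le_rfl, prepend _ _ _ _ s s' 0 hd ⟨fun _ => s', rfl,
    fun t ht => absurd ht (by omega), hd.1, ?_⟩⟩
  intro s'' hd'
  obtain ⟨i, hi⟩ := Function.ne_iff.mp hd'.2.1
  have h1 := hd'.2.2 i hi
  rw [payoff_eq hn, payoff_eq hn] at h1
  have h2 : q (β i) (s' (prd n hn i)) (s' i) < q (β i) (s'' (prd n hn i)) (s'' i) := by
    exact_mod_cast h1
  have h3 := hlt i (hne i)
  have h4 := hb i _ (ha i).1
  have h5 : β i (a i) ≤ q (β i) (s (prd n hn i)) (a i) := by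
    unfold q; omega
  have h6 : q (β i) (s'' (prd n hn i)) (s'' i) ≤ 1 + β i (s'' i) := by
    unfold q; split_ifs <;> omega
  have h7 := (ha i).2 _ (hd'.1 i)
  omega

/-- There is a constant `c` such that every coordination game with bonuses on
an unweighted simple cycle on `n` nodes admits, from every joint strategy, a
finite c-improvement path of length at most `c * n` ending in a strong
equilibrium. -/
theorem cycle_bonuses_cimprovement_path :
    ∃ c : ℕ,
      ∀ (n : ℕ), 2 ≤ n →
      ∀ (M : Type) [Fintype M],
      ∀ (β : Fin n → M → ℕ) (C : Fin n → Finset M),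
        (∀ i, (C i).Nonempty) →
        ∀ s : Fin n → M, Valid C s →
          ∃ L, L ≤ c * n ∧ CImpPath (cycAdj n) (fun _ _ => 1) β C s L := by
  refine ⟨4, ?_⟩
  intro n hn M _ β C hC s hs
  have hex : ∀ i, ∃ x, IsA (β i) (C i) x := by
    intro i
    obtain ⟨x, hx, h⟩ := Finset.exists_max_image (C i) (β i) (hC i)
    exact ⟨x, hx, h⟩
  choose a ha using hex
  have key : ∀ k, k ≤ 3 * n → ∃ L, L ≤ k + 1 ∧
      CImpPath (cycAdj n) (fun _ _ => 1) β C (St hn β C a s (3 * n - k)) L := by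
    intro k
    induction k with
    | zero =>
      intro _
      exact nash_final hn β C a ha _ (St_valid hn β C a ha s hs _)
        (final_best hn β C a ha s hs)
    | succ k ih =>
      intro hk
      obtain ⟨L, hL, hp⟩ := ih (by omega)
      rw [show 3 * n - k = (3 * n - (k + 1)) + 1 by omega] at hp
      have hp' : CImpPath (cycAdj n) (fun _ _ => 1) β C
        (step hn β C a (nu n hn (3 * n - (k + 1))) (St hn β C a s (3 * n - (k + 1)))) L := hp
      rcases step_dev hn β C a ha (nu n hn (3 * n - (k + 1))) _
        (St_valid hn β C a ha s hs (3 * n - (k + 1))) with h | h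
      · rw [h] at hp'
        exact ⟨L, by omega, hp'⟩
      · exact ⟨L + 1, by omega, prepend _ _ _ _ _ _ _ h hp'⟩
  obtain ⟨L, hL, hp⟩ := key (3 * n) le_rfl
  rw [Nat.sub_self] at hp
  exact ⟨L, by omega, hp⟩

end CG
end

section
/- There is a constant c (independent of the game) such that every coordination game with arbitrary bonuses on a simple cycle on n nodes in which at most two edges have weight different from 1 (all other edges have weight 1) admits, from every joint strategy, a finite improvement path of length at most c·n (hence ending in a Nash equilibrium). -/
open scoped Classical

namespace CG

section aux

variable {V M : Type}

/-- Local payoff of node `i` playing `z` when its predecessor plays `y`. -/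
noncomputable def lf (W : V → ℝ) (β : V → M → ℕ) (i : V) (y z : M) : ℝ :=
  (if y = z then W i else 0) + (β i z : ℝ)

/-- Best response. -/
def BR (W : V → ℝ) (β : V → M → ℕ) (C : V → Finset M) (i : V) (y z : M) : Prop :=
  z ∈ C i ∧ ∀ z' ∈ C i, lf W β i y z' ≤ lf W β i y z

/-- Colours of maximal bonus. -/
def AM (β : V → M → ℕ) (C : V → Finset M) (i : V) (z : M) : Prop :=
  z ∈ C i ∧ ∀ z' ∈ C i, β i z' ≤ β i z

/-- The response rule. -/
noncomputable def resp (W : V → ℝ) (β : V → M → ℕ) (C : V → Finset M) (a : V → M)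
    (i : V) (y z : M) : M :=
  if BR W β C i y z then z else if BR W β C i y (a i) then a i else y

variable (W : V → ℝ) (β : V → M → ℕ) (C : V → Finset M) (a : V → M)

theorem BR_self {i : V} (hW : 0 ≤ W i) {y x : M} (h : BR W β C i y x) : BR W β C i x x := by
  refine ⟨h.1, fun z hz => ?_⟩
  have := h.2 z hz
  unfold lf at *
  by_cases hxz : x = z
  · subst hxz; exact le_rfl
  · simp only [hxz, if_false, if_true] at *
    split_ifs at this <;> linarith

theorem copy_of_not {i : V} (hW : 0 ≤ W i) (ha : AM β C i (a i)) {y : M}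
    (h : ¬ BR W β C i y (a i)) :
    y ∈ C i ∧ (β i (a i) : ℝ) < W i + β i y ∧ BR W β C i y y := by
  have h1 : ∃ z ∈ C i, lf W β i y (a i) < lf W β i y z := by
    by_contra hc
    push Not at hc
    exact h ⟨ha.1, hc⟩
  obtain ⟨z, hz, hlt⟩ := h1
  have hβ : ∀ z ∈ C i, (β i z : ℝ) ≤ β i (a i) := fun z hz => by exact_mod_cast ha.2 z hz
  have hz1 := hβ z hz
  have hyz : y = z := by
    by_contra hne
    unfold lf at hlt
    simp only [hne, if_false] at hlt
    split_ifs at hlt <;> linarith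
  subst hyz
  have hlt2 : (β i (a i) : ℝ) < W i + β i y := by
    unfold lf at hlt
    simp only [if_true] at hlt
    split_ifs at hlt <;> linarith
  refine ⟨hz, hlt2, hz, fun z' hz' => ?_⟩
  have := hβ z' hz'
  unfold lf
  by_cases h' : y = z'
  · subst h'; exact le_rfl
  · simp only [h', if_false, if_true]; linarith

theorem resp_BR {i : V} (hW : 0 ≤ W i) (ha : AM β C i (a i)) (y z : M) :
    BR W β C i y (resp W β C a i y z) := by
  unfold resp
  split_ifs with h1 h2
  · exact h1
  · exact h2
  · exact (copy_of_not W β C a hW ha h2).2.2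

theorem resp_AM {i : V} (hW : 0 ≤ W i) (hW1 : W i ≤ 1) (ha : AM β C i (a i)) {y z : M}
    (h : ¬ BR W β C i y z) : AM β C i (resp W β C a i y z) := by
  unfold resp
  rw [if_neg h]
  split_ifs with h2
  · exact ha
  · obtain ⟨h3, h4, -⟩ := copy_of_not W β C a hW ha h2
    refine ⟨h3, fun z' hz' => ?_⟩
    have h5 : (β i (a i) : ℝ) < 1 + β i y := by linarith
    have h6 : β i (a i) < 1 + β i y := by exact_mod_cast h5
    have := ha.2 z' hz'
    omega

theorem resp_copy {i : V} (hW : 0 ≤ W i) (ha : AM β C i (a i)) {y z : M}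
    (hz : AM β C i z) (h : ¬ BR W β C i y z) : resp W β C a i y z = y := by
  unfold resp
  rw [if_neg h]
  split_ifs with h2
  · by_contra hne
    apply h
    refine ⟨hz.1, fun z' hz' => (h2.2 z' hz').trans ?_⟩
    have : (β i (a i) : ℝ) ≤ β i z := by exact_mod_cast hz.2 _ ha.1
    unfold lf
    rw [if_neg (fun h => hne h.symm)]
    split_ifs <;> linarith
  · rfl

theorem resp_cases {i : V} {y z : M} (h : ¬ BR W β C i y z) :
    resp W β C a i y z = y ∨ resp W β C a i y z = a i := by
  unfold resp
  rw [if_neg h]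
  split_ifs <;> simp

/-- Combinatorial core. -/
theorem core (n : ℕ) (hn : 2 ≤ n) (pos : ℕ → V)
    (hper : ∀ t, pos (t + n) = pos t)
    (hinj : ∀ t u, t < u → u < t + n → pos t ≠ pos u)
    (hW : ∀ i, 0 ≤ W i) (ha : ∀ i, AM β C i (a i)) (p q : V)
    (hpq : ∀ i, ¬ W i ≤ 1 → i = p ∨ i = q) (v : ℕ → M)
    (hv : ∀ t, v (t + n) = resp W β C a (pos t) (v (t + n - 1)) (v t))
    (hb : ∀ t, t + n ≤ 5 * n → ¬ BR W β C (pos t) (v (t + n - 1)) (v t)) : False := by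
  have hA : ∀ t, n ≤ t → t ≤ 5 * n → W (pos t) ≤ 1 → AM β C (pos t) (v t) := by
    intro t h1 h2 h3
    obtain ⟨u, rfl⟩ := Nat.exists_eq_add_of_le' h1
    rw [hper] at *
    rw [hv]
    exact resp_AM W β C a (hW _) h3 (ha _) (hb u h2)
  have hcopy : ∀ t, t + n ≤ 5 * n → AM β C (pos t) (v t) → v (t + n) = v (t + n - 1) := by
    intro t h1 h2
    rw [hv]
    exact resp_copy W β C a (hW _) (ha _) h2 (hb t h1)
  have hnc : ∀ t, 2 * n ≤ t → t ≤ 5 * n → v t ≠ v (t - 1) →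
      (pos t = p ∨ pos t = q) ∧ AM β C (pos t) (v t) := by
    intro t h1 h2 h3
    obtain ⟨u, rfl⟩ := Nat.exists_eq_add_of_le' (show n ≤ t by omega)
    constructor
    · rw [hper]
      apply hpq
      intro h4
      exact h3 (hcopy u h2 (hA u (by omega) (by omega) h4))
    · rw [hper]
      rw [hv] at h3 ⊢
      rcases resp_cases W β C a (hb u h2) with h | h
      · exact absurd h h3
      · rw [h]; exact ha _
  have hex : ∀ t, 2 * n ≤ t → t + n ≤ 5 * n → ∃ t', t < t' ∧ t' < t + n ∧ v t' ≠ v (t' - 1) := by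
    intro t h1 h2
    by_contra hc
    push Not at hc
    have hall : ∀ k, k < n → v (t + k) = v t := by
      intro k
      induction k with
      | zero => intro _; rfl
      | succ k ih =>
        intro hk
        rw [hc (t + (k + 1)) (by omega) (by omega)]
        exact ih (by omega)
    have h3 := hall (n - 1) (by omega)
    apply hb t h2
    rw [show t + n - 1 = t + (n - 1) by omega, h3]
    obtain ⟨u, rfl⟩ := Nat.exists_eq_add_of_le' (show n ≤ t by omega)
    rw [hper, hv]
    exact BR_self W β C (hW _) (resp_BR W β C a (hW _) (ha _) _ _)
  obtain ⟨t0, h01, h02, h03⟩ := hex (2 * n) le_rfl (by omega)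
  obtain ⟨t1, h11, h12, h13⟩ := hex t0 (by omega) (by omega)
  obtain ⟨t2, h21, h22, h23⟩ := hex t1 (by omega) (by omega)
  have g0 := hnc t0 (by omega) (by omega) h03
  have g1 := hnc t1 (by omega) (by omega) h13
  have g2 := hnc t2 (by omega) (by omega) h23
  have e01 := hinj t0 t1 h11 h12
  have e12 := hinj t1 t2 h21 h22
  have e02 : pos t0 = pos t2 := by
    rcases g0.1 with h | h <;> rcases g1.1 with h' | h' <;> rcases g2.1 with h'' | h'' <;>
      simp_all
  have ht : t2 = t0 + n := by
    rcases lt_trichotomy t2 (t0 + n) with h | h | h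
    · exact absurd e02 (hinj t0 t2 (by omega) h)
    · exact h
    · refine absurd ?_ (hinj (t0 + n) t2 h (by omega))
      rw [hper]; exact e02
  subst ht
  exact h23 (hcopy t0 (by omega) g0.2)

theorem impPath_of_steps [Fintype V] (adj : V → V → Prop) (w : V → V → ℝ)
    (T : ℕ) : ∀ x : ℕ → V → M,
      (∀ t, x (t + 1) = x t ∨ UniDev adj w β C (x t) (x (t + 1))) →
      IsNash adj w β C (x T) → ∃ L, L ≤ T ∧ ImpPath adj w β C (x 0) L := by
  induction T with
  | zero => intro x _ h; exact ⟨0, le_rfl, x, rfl, by simp, h⟩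
  | succ T ih =>
    intro x hx h
    obtain ⟨L, hL, σ, h0, h1, h2⟩ := ih (fun t => x (t + 1)) (fun t => hx (t + 1)) h
    rcases hx 0 with h' | h'
    · exact ⟨L, by omega, σ, h0.trans h', h1, h2⟩
    · refine ⟨L + 1, by omega, fun t => Nat.casesOn t (x 0) σ, rfl, ?_, h2⟩
      intro t ht
      cases t with
      | zero => simpa [h0] using h'
      | succ t => exact h1 t (by omega)

end aux

/-- There is a constant `c` such that every coordination game with arbitrary
bonuses on a simple cycle on `n` nodes in which at most two edges have weight
different from `1` (all other edges have weight `1`) admits, from every joint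
strategy, a finite improvement path of length at most `c * n` ending in a
Nash equilibrium. -/
theorem cycle_two_nontrivial_weights_improvement_path :
    ∃ c : ℕ,
      ∀ (n : ℕ), 2 ≤ n →
      ∀ (M : Type) [Fintype M],
      ∀ (w : Fin n → Fin n → ℝ), (∀ i j, cycAdj n i j → 0 ≤ w i j) →
        (∃ a b : Fin n, ∀ i j, cycAdj n i j → w i j ≠ 1 → i = a ∨ i = b) →
      ∀ (β : Fin n → M → ℕ),
      ∀ (C : Fin n → Finset M), (∀ i, (C i).Nonempty) →
      ∀ s : Fin n → M, Valid C s →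
        ∃ L, L ≤ c * n ∧ ImpPath (cycAdj n) w β C s L := by
  refine ⟨5, ?_⟩
  intro n hn M _ w hw0 hw β C hC s hs
  obtain ⟨ea, eb, hab⟩ := hw
  have hn0 : 0 < n := by omega
  obtain ⟨pos, hpos⟩ : ∃ pos : ℕ → Fin n, ∀ t, (pos t).val = t % n :=
    ⟨fun t => ⟨t % n, Nat.mod_lt _ hn0⟩, fun _ => rfl⟩
  have hposval : ∀ i : Fin n, pos i.val = i := fun i =>
    Fin.ext (by rw [hpos, Nat.mod_eq_of_lt i.isLt])
  have hper : ∀ t, pos (t + n) = pos t := fun t => Fin.ext (by simp [hpos])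
  have hinj : ∀ t u, t < u → u < t + n → pos t ≠ pos u := by
    intro t u h1 h2 h
    have h3 := congrArg Fin.val h
    rw [hpos, hpos] at h3
    have h4 : (u - t) % n = 0 := Nat.sub_mod_eq_zero_of_mod_eq h3.symm
    rw [Nat.mod_eq_of_lt (by omega)] at h4
    omega
  have hadj : ∀ t j, cycAdj n j (pos (t + 1)) ↔ j = pos t := by
    intro t j
    constructor
    · intro h
      unfold cycAdj at h
      rw [hpos] at h
      have h2 : (j.val + 1) ≡ (t + 1) [MOD n] := h
      have h3 : j.val ≡ t [MOD n] := Nat.ModEq.add_right_cancel' 1 h2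
      apply Fin.ext
      rw [hpos, ← h3, Nat.mod_eq_of_lt j.isLt]
    · rintro rfl
      unfold cycAdj
      rw [hpos, hpos]
      simp
  obtain ⟨prd, hprd⟩ : ∃ prd : Fin n → Fin n, ∀ i, prd i = pos (i.val + n - 1) := ⟨_, fun _ => rfl⟩
  have hadj' : ∀ i j, cycAdj n j i ↔ j = prd i := by
    intro i j
    rw [hprd, ← hadj, show i.val + n - 1 + 1 = i.val + n by omega, hper, hposval]
  have hprdpos : ∀ t, prd (pos (t + 1)) = pos t := by
    intro t
    exact ((hadj t _).1 ((hadj' _ _).2 rfl))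
  obtain ⟨W, hWdef⟩ : ∃ W : Fin n → ℝ, ∀ i, W i = w (prd i) i := ⟨_, fun _ => rfl⟩
  have hW : ∀ i, 0 ≤ W i := fun i => by
    rw [hWdef]; exact hw0 _ _ ((hadj' _ _).2 rfl)
  have hpq : ∀ i, ¬ W i ≤ 1 → i = pos (ea.val + 1) ∨ i = pos (eb.val + 1) := by
    intro i hi
    have h1 : w (prd i) i ≠ 1 := by
      rw [← hWdef]; intro h; exact hi h.le
    have hc : cycAdj n (prd i) i := (hadj' _ _).2 rfl
    have key : ∀ e, prd i = e → i = pos (e.val + 1) := by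
      intro e he
      rw [he] at hc
      apply Fin.ext
      rw [hpos]
      exact hc.symm
    exact (hab _ _ hc h1).imp (key _) (key _)
  have hpay : ∀ (x : Fin n → M) i, payoff (cycAdj n) w β x i = lf W β i (x (prd i)) (x i) := by
    intro x i
    unfold payoff lf
    congr 1
    rw [Finset.sum_filter]
    simp only [hadj']
    rw [Finset.sum_eq_single (prd i)]
    · simp [hWdef]
    · intro j _ hj; simp [hj]
    · simp
  have hprdne : ∀ i, prd i ≠ i := by
    intro i
    have h := hinj i.val (i.val + n - 1) (by omega) (by omega)
    rw [hposval, ← hprd] at h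
    exact h.symm
  have haex : ∀ i, ∃ z, AM β C i z := by
    intro i
    obtain ⟨z, hz, hz'⟩ := Finset.exists_max_image (C i) (β i) (hC i)
    exact ⟨z, hz, hz'⟩
  choose a ha using haex
  -- the sequence of joint strategies
  obtain ⟨x, hx0, hxs⟩ : ∃ x : ℕ → Fin n → M, x 0 = s ∧ ∀ t, x (t + 1) =
      Function.update (x t) (pos t)
        (resp W β C a (pos t) (x t (prd (pos t))) (x t (pos t))) :=
    ⟨fun t => Nat.rec s (fun t y => Function.update y (pos t)
        (resp W β C a (pos t) (y (prd (pos t))) (y (pos t)))) t, rfl, fun _ => rfl⟩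
  have hvalid : ∀ t, Valid C (x t) := by
    intro t
    induction t with
    | zero => rw [hx0]; exact hs
    | succ t ih =>
      intro i
      rw [hxs]
      by_cases hi : i = pos t
      · subst hi
        rw [Function.update_self]
        exact (resp_BR W β C a (hW _) (ha _) _ _).1
      · rw [Function.update_of_ne hi]; exact ih i
  have hself : ∀ t, x (t + 1) (pos t) =
      resp W β C a (pos t) (x t (prd (pos t))) (x t (pos t)) := by
    intro t; rw [hxs, Function.update_self]
  have hother : ∀ t i, i ≠ pos t → x (t + 1) i = x t i := by
    intro t i hi; rw [hxs, Function.update_of_ne hi]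
  have hstep : ∀ t, x (t + 1) = x t ∨ UniDev (cycAdj n) w β C (x t) (x (t + 1)) := by
    intro t
    by_cases hb : BR W β C (pos t) (x t (prd (pos t))) (x t (pos t))
    · left
      rw [hxs]
      unfold resp
      rw [if_pos hb, Function.update_eq_self]
    · right
      have hbr := resp_BR W β C a (hW (pos t)) (ha (pos t)) (x t (prd (pos t))) (x t (pos t))
      rw [← hself] at hbr
      have hlt : lf W β (pos t) (x t (prd (pos t))) (x t (pos t)) <
          lf W β (pos t) (x t (prd (pos t))) (x (t + 1) (pos t)) := by
        by_contra hc
        push Not at hc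
        exact hb ⟨hvalid t _, fun z' hz' => (hbr.2 z' hz').trans hc⟩
      refine ⟨⟨hvalid _, ?_, ?_⟩, pos t, fun j hj => (hother t j hj).symm⟩
      · intro h
        rw [← h] at hlt
        exact lt_irrefl _ hlt
      · intro i hi
        have : i = pos t := by
          by_contra hne
          exact hi (hother t i hne).symm
        subst this
        rw [hpay, hpay, hother t _ (hprdne _)]
        exact hlt
  have hnash : ∀ t, (∀ i, BR W β C i (x t (prd i)) (x t i)) → IsNash (cycAdj n) w β C (x t) := by
    intro t h
    refine ⟨hvalid t, ?_⟩
    rintro s' ⟨⟨hv', hne, hp⟩, i, hi⟩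
    have hsi : x t i ≠ s' i := by
      intro h'
      apply hne
      funext j
      by_cases hj : j = i
      · rw [hj]; exact h'
      · exact hi j hj
    have h1 := hp i hsi
    rw [hpay, hpay, ← hi _ (hprdne i)] at h1
    exact absurd ((h i).2 _ (hv' i)) (not_le.2 h1)
  have hpers : ∀ u k, k < n → x (u + k + 1) (pos u) = x (u + 1) (pos u) := by
    intro u k
    induction k with
    | zero => intro _; rfl
    | succ k ih =>
      intro hk
      rw [hother _ _ (hinj u (u + (k + 1)) (by omega) (by omega))]
      exact ih (by omega)
  have hinv : ∀ u k, k + 1 < n →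
      BR W β C (pos u) (x (u + k + 1) (prd (pos u))) (x (u + k + 1) (pos u)) := by
    intro u k
    induction k with
    | zero =>
      intro _
      rw [Nat.add_zero, hother u _ (hprdne _), hself]
      exact resp_BR W β C a (hW _) (ha _) _ _
    | succ k ih =>
      intro hk
      have h1 := hinj u (u + (k + 1)) (by omega) (by omega)
      have h2 : prd (pos u) ≠ pos (u + (k + 1)) := by
        have h3 := hinj (u + (k + 1)) (u + n - 1) (by omega) (by omega)
        have h4 : prd (pos u) = pos (u + n - 1) := by
          rw [← hprdpos (u + n - 1), show u + n - 1 + 1 = u + n by omega, hper]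
        rw [h4]; exact h3.symm
      rw [hother _ _ h1, hother _ _ h2]
      exact ih (by omega)
  have hT : ∃ T, T ≤ 5 * n ∧ IsNash (cycAdj n) w β C (x T) := by
    by_contra hc
    push Not at hc
    have hcur : ∀ t, x (t + n) (pos t) = x (t + 1) (pos t) := by
      intro t
      have := hpers t (n - 1) (by omega)
      rwa [show t + (n - 1) + 1 = t + n by omega] at this
    have hprev : ∀ t, x (t + n) (prd (pos t)) = x (t + n - 1 + 1) (pos (t + n - 1)) := by
      intro t
      rw [← hprdpos (t + n - 1), show t + n - 1 + 1 = t + n by omega, hper]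
    refine core W β C a n hn pos hper hinj hW ha _ _ hpq (fun t => x (t + 1) (pos t)) ?_ ?_
    · intro t
      show x (t + n + 1) (pos (t + n)) = _
      rw [hself, hper, hcur, hprev]
    · intro t ht hb
      apply hc (t + n) ht
      apply hnash
      intro i
      have hb' : BR W β C (pos t) (x (t + n) (prd (pos t))) (x (t + n) (pos t)) := by
        rw [hcur, hprev]; exact hb
      -- every node is `pos (t + m)` with `m < n`
      obtain ⟨m, hm, rfl⟩ : ∃ m, m < n ∧ i = pos (t + m) := by
        refine ⟨(i.val + (n - t % n)) % n, Nat.mod_lt _ hn0, ?_⟩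
        apply Fin.ext
        rw [hpos, Nat.add_mod_mod]
        have h1 := Nat.mod_lt t hn0
        have h2 := Nat.div_add_mod t n
        rw [show t + (i.val + (n - t % n)) = i.val + n * (t / n + 1) by
          rw [Nat.mul_add]; omega]
        rw [Nat.add_mul_mod_self_left, Nat.mod_eq_of_lt i.isLt]
      rcases Nat.eq_zero_or_pos m with rfl | hmp
      · exact hb'
      · have := hinv (t + m) (n - m - 1) (by omega)
        rwa [show t + m + (n - m - 1) + 1 = t + n by omega] at this
  obtain ⟨T, hT5, hTn⟩ := hT
  obtain ⟨L, hL, hI⟩ := impPath_of_steps β C (cycAdj n) w T x hstep hTn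
  rw [hx0] at hI
  exact ⟨L, hL.trans hT5, hI⟩

end CG
end

section
/- In a coordination game on a weighted simple cycle with bonuses, every Nash equilibrium s satisfies: either s is a strong equilibrium, or there exists a single profitable coalition deviation from s whose resulting joint strategy is a strong equilibrium. Consequently, any finite improvement path can be extended to a finite c-improvement path by appending at most one profitable coalition deviation step at its end. -/
open scoped Classical

namespace CG

theorem fin_one_val {n : ℕ} [NeZero n] : ((1 : Fin n) : ℕ) = 1 % n := rfl

theorem payoff_cyc {n : ℕ} [NeZero n] (hn : 2 ≤ n) {M : Type} 
    (w : Fin n → Fin n → ℝ) (β : Fin n → M → ℕ) (s : Fin n → M) (i : Fin n) :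
    payoff (cycAdj n) w β s i
      = (if s (i - 1) = s i then w (i - 1) i else 0) + (β i (s i) : ℝ) := by
  have hadj : ∀ j, cycAdj n j i ↔ j = i - 1 := by
    intro j
    rw [eq_sub_iff_add_eq, Fin.ext_iff, Fin.val_add, fin_one_val]
    simp [cycAdj]
  unfold payoff
  congr 1
  split_ifs with h
  · have : Finset.univ.filter (fun j => cycAdj n j i ∧ s j = s i) = {i - 1} := by
      ext j
      simp only [Finset.mem_filter, Finset.mem_univ, true_and, Finset.mem_singleton, hadj]
      constructor
      · exact fun h => h.1
      · rintro rfl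
        exact ⟨rfl, h⟩
    rw [this, Finset.sum_singleton]
  · apply Finset.sum_eq_zero
    intro j hj
    simp only [Finset.mem_filter, Finset.mem_univ, true_and, hadj] at hj
    obtain ⟨rfl, h2⟩ := hj
    exact absurd h2 h

theorem pred_ne {n : ℕ} [NeZero n] (hn : 2 ≤ n) (i : Fin n) : i - 1 ≠ i := by
  intro h
  rw [sub_eq_self, Fin.ext_iff, fin_one_val] at h
  rw [Nat.mod_eq_of_lt (by omega)] at h
  simp at h

open Fin.CommRing in
theorem cyc_ind {n : ℕ} [NeZero n] (P : Fin n → Prop) (hP : ∀ i, P i → P (i - 1))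
    (i : Fin n) (hi : P i) (j : Fin n) : P j := by
  have h : ∀ k : ℕ, P (i - (k : Fin n)) := by
    intro k
    induction k with
    | zero => simpa using hi
    | succ k ih =>
      have := hP _ ih
      rwa [sub_sub, ← Nat.cast_succ] at this
  have := h (i - j).val
  rwa [Fin.cast_val_eq_self, sub_sub_cancel] at this

theorem nash_upd {n : ℕ} [NeZero n] (hn : 2 ≤ n) {M : Type}
    (w : Fin n → Fin n → ℝ) (β : Fin n → M → ℕ) (C : Fin n → Finset M)
    (s : Fin n → M) (hs : IsNash (cycAdj n) w β C s) (i : Fin n) (d : M) (hd : d ∈ C i) :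
    (if s (i - 1) = d then w (i - 1) i else 0) + (β i d : ℝ)
      ≤ payoff (cycAdj n) w β s i := by
  by_contra hlt
  push Not at hlt
  have hpu : payoff (cycAdj n) w β (Function.update s i d) i
      = (if s (i - 1) = d then w (i - 1) i else 0) + (β i d : ℝ) := by
    rw [payoff_cyc hn]
    simp [Function.update_of_ne (pred_ne hn i)]
  apply hs.2 (Function.update s i d)
  refine ⟨⟨?_, ?_, ?_⟩, i, ?_⟩
  · intro j
    by_cases hj : j = i
    · subst hj; simpa using hd
    · rw [Function.update_of_ne hj]; exact hs.1 j
  · intro h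
    rw [← h] at hpu
    linarith
  · intro j hj
    by_cases hji : j = i
    · subst hji; linarith
    · rw [Function.update_of_ne hji] at hj; exact absurd rfl hj
  · intro j hj
    rw [Function.update_of_ne hj]

theorem nash_dev {n : ℕ} [NeZero n] (hn : 2 ≤ n) {M : Type}
    (w : Fin n → Fin n → ℝ) (hw : ∀ i, 0 ≤ w (i - 1) i)
    (β : Fin n → M → ℕ) (C : Fin n → Finset M)
    (s s' : Fin n → M) (hs : IsNash (cycAdj n) w β C s)
    (h : ProfDev (cycAdj n) w β C s s') :
    (∃ c, s' = fun _ => c) ∧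
      ∀ i, payoff (cycAdj n) w β s i < payoff (cycAdj n) w β s' i := by
  obtain ⟨hv, hne, hp⟩ := h
  obtain ⟨i0, hi0⟩ := Function.ne_iff.mp hne
  have key : ∀ i, s i ≠ s' i → s (i - 1) ≠ s' (i - 1) ∧ s' (i - 1) = s' i := by
    intro i hi
    have h1 := hp i hi
    have h2 := nash_upd hn w β C s hs i (s' i) (hv i)
    rw [payoff_cyc hn w β s' i] at h1
    have := hw i
    constructor
    · intro he
      rw [he] at h2
      linarith
    · by_contra he
      rw [if_neg he] at h1
      split_ifs at h2 <;> linarith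
  have hall := cyc_ind (fun j => s j ≠ s' j ∧ s' j = s' i0)
    (fun i hi => ⟨(key i hi.1).1, (key i hi.1).2.trans hi.2⟩) i0 ⟨hi0, rfl⟩
  exact ⟨⟨s' i0, funext fun j => (hall j).2⟩, fun i => hp i (hall i).1⟩

theorem const_nash {n : ℕ} [NeZero n] (hn : 2 ≤ n) {M : Type}
    (w : Fin n → Fin n → ℝ) (hw : ∀ i, 0 ≤ w (i - 1) i)
    (β : Fin n → M → ℕ) (C : Fin n → Finset M)
    (s : Fin n → M) (c : M) (hs : IsNash (cycAdj n) w β C s)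
    (hv : Valid C (fun _ : Fin n => c))
    (h : ∀ i, payoff (cycAdj n) w β s i < payoff (cycAdj n) w β (fun _ => c) i) :
    IsNash (cycAdj n) w β C (fun _ => c) := by
  refine ⟨hv, ?_⟩
  rintro t ⟨⟨htv, hne, hp⟩, k, hk⟩
  obtain ⟨i, hi⟩ := Function.ne_iff.mp hne
  have hik : i = k := by
    by_contra h0
    exact hi (hk i h0)
  subst hik
  have h1 := hp i hi
  have h2 := h i
  have h3 := nash_upd hn w β C s hs i (t i) (htv i)
  have h4 := hk (i - 1) (pred_ne hn i)
  rw [payoff_cyc hn w β t i, ← h4, if_neg hi] at h1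
  have := hw i
  split_ifs at h3 <;> linarith

theorem nash_main {n : ℕ} [NeZero n] (hn : 2 ≤ n) {M : Type} [Fintype M]
    (w : Fin n → Fin n → ℝ) (hw : ∀ i, 0 ≤ w (i - 1) i)
    (β : Fin n → M → ℕ) (C : Fin n → Finset M)
    (s : Fin n → M) (hs : IsNash (cycAdj n) w β C s) :
    IsStrong (cycAdj n) w β C s ∨
        ∃ s', ProfDev (cycAdj n) w β C s s' ∧ IsStrong (cycAdj n) w β C s' := by
  by_cases hst : IsStrong (cycAdj n) w β C s
  · exact Or.inl hst
  right
  have hex : ∃ s', ProfDev (cycAdj n) w β C s s' := by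
    by_contra h0
    push Not at h0
    exact hst ⟨hs.1, h0⟩
  obtain ⟨s', hs', hmax⟩ := Set.exists_max_image {s' | ProfDev (cycAdj n) w β C s s'}
    (fun s' => payoff (cycAdj n) w β s' 0) (Set.toFinite _) hex
  refine ⟨s', hs', hs'.1, ?_⟩
  intro t ht
  obtain ⟨⟨c, hc⟩, hlt⟩ := nash_dev hn w hw β C s s' hs hs'
  have hv := hs'.1
  have hn' : IsNash (cycAdj n) w β C s' := by
    rw [hc] at hlt hv ⊢
    exact const_nash hn w hw β C s c hs hv hlt
  obtain ⟨-, hlt2⟩ := nash_dev hn w hw β C s' t hn' ht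
  have hst' : ProfDev (cycAdj n) w β C s t := by
    refine ⟨ht.1, ?_, fun i _ => (hlt i).trans (hlt2 i)⟩
    rintro rfl
    exact lt_asymm (hlt 0) (hlt2 0)
  exact absurd (hlt2 0) (not_lt.mpr (hmax t hst'))

/-- In a coordination game on a weighted simple cycle with bonuses, every Nash
equilibrium is a strong equilibrium or admits a single profitable coalition
deviation leading to a strong equilibrium; consequently every finite
improvement path extends to a finite c-improvement path by appending at most
one profitable coalition deviation step. -/
theorem cycle_nash_one_coalition_step_to_strong
    {n : ℕ} (hn : 2 ≤ n) {M : Type} [Fintype M]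
    (w : Fin n → Fin n → ℝ) (hw : ∀ i j, cycAdj n i j → 0 ≤ w i j)
    (β : Fin n → M → ℕ)
    (C : Fin n → Finset M) (hC : ∀ i, (C i).Nonempty) :
    (∀ s : Fin n → M, IsNash (cycAdj n) w β C s →
        IsStrong (cycAdj n) w β C s ∨
        ∃ s', ProfDev (cycAdj n) w β C s s' ∧ IsStrong (cycAdj n) w β C s') ∧
    (∀ (s : Fin n → M) (L : ℕ), ImpPath (cycAdj n) w β C s L →
        ∃ L', L' ≤ L + 1 ∧ CImpPath (cycAdj n) w β C s L') := by
  have : NeZero n := ⟨by omega⟩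
  have hw' : ∀ i : Fin n, 0 ≤ w (i - 1) i := by
    intro i
    apply hw
    have h : i - 1 + 1 = i := sub_add_cancel i 1
    rw [Fin.ext_iff, Fin.val_add, fin_one_val] at h
    simpa [cycAdj] using h
  have main := fun s hs => nash_main hn w hw' β C s hs
  refine ⟨main, ?_⟩
  rintro s L ⟨σ, h0, hstep, hN⟩
  rcases main _ hN with h | ⟨s', hd, hst⟩
  · exact ⟨L, by omega, σ, h0, fun t ht => (hstep t ht).1, h⟩
  · refine ⟨L + 1, le_rfl, fun t => if t ≤ L then σ t else s', by simpa using h0, ?_, ?_⟩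
    · intro t ht
      by_cases htL : t < L
      · have h1 : t ≤ L := by omega
        have h2 : t + 1 ≤ L := by omega
        simp only [h1, h2, if_true]
        exact (hstep t htL).1
      · have h1 : t = L := by omega
        subst h1
        simpa using hd
    · simpa using hst

end CG
end

section
/- There is a constant c (independent of the game) such that every coordination game on a weighted simple cycle on n nodes in which at most two nodes have a non-zero bonus, and every coordination game with arbitrary bonuses on a simple cycle on n nodes in which at most two edges have weight different from 1 (all other edges have weight 1), admits, from every joint strategy, a finite c-improvement path of length at most c·n (hence ending in a strong equilibrium). -/
open scoped Classical

namespace CG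

section helpers

/-- Best-response-like update rule. -/
noncomputable def g {n : ℕ} {M : Type} (W : Fin n → ℝ) (β : Fin n → M → ℕ)
    (C : Fin n → Finset M) (a : Fin n → M) (j : Fin n) (x c : M) : M :=
  if x ∈ C j ∧ (β j (a j) : ℝ) < W j + β j x then x
  else if (β j (a j) : ℝ) ≤ (if x = c then W j else 0) + β j c then c else a j

theorem g_mem {n : ℕ} {M : Type} (W : Fin n → ℝ) (β : Fin n → M → ℕ)
    (C : Fin n → Finset M) (a : Fin n → M) (ha : ∀ j, a j ∈ C j) (j : Fin n) (x c : M)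
    (hc : c ∈ C j) : g W β C a j x c ∈ C j := by
  unfold g
  split_ifs with h1 h2
  · exact h1.1
  · exact hc
  · exact ha j
  all_goals first | exact hc | exact ha j

theorem g_best {n : ℕ} {M : Type} (W : Fin n → ℝ) (hW : ∀ j, 0 ≤ W j) (β : Fin n → M → ℕ)
    (C : Fin n → Finset M) (a : Fin n → M)
    (hb : ∀ j, ∀ d ∈ C j, β j d ≤ β j (a j)) (j : Fin n) (x c d : M) (hd : d ∈ C j) :
    (if x = d then W j else 0) + (β j d : ℝ) ≤
      (if x = g W β C a j x c then W j else 0) + (β j (g W β C a j x c) : ℝ) := by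
  have h0 := hW j
  have h1 : (β j d : ℝ) ≤ β j (a j) := by exact_mod_cast hb j d hd
  by_cases hS : x ∈ C j ∧ (β j (a j) : ℝ) < W j + β j x
  · have e : g W β C a j x c = x := by unfold g; rw [if_pos hS]
    rw [e, if_pos rfl]
    by_cases hxd : x = d
    · subst hxd; simp
    · rw [if_neg hxd]; linarith [hS.2]
  · have key : (if x = d then W j else 0) + (β j d : ℝ) ≤ β j (a j) := by
      by_cases hxd : x = d
      · subst hxd
        rw [if_pos rfl]
        by_contra hh
        exact hS ⟨hd, not_le.mp hh⟩
      · rw [if_neg hxd]; linarith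
    refine key.trans ?_
    by_cases h2 : (β j (a j) : ℝ) ≤ (if x = c then W j else 0) + β j c
    · have e : g W β C a j x c = c := by unfold g; rw [if_neg hS, if_pos h2]
      rw [e]; exact h2
    · have e : g W β C a j x c = a j := by unfold g; rw [if_neg hS, if_neg h2]
      rw [e]; split_ifs <;> linarith

theorem g_strict {n : ℕ} {M : Type} (W : Fin n → ℝ) (hW : ∀ j, 0 ≤ W j) (β : Fin n → M → ℕ)
    (C : Fin n → Finset M) (a : Fin n → M)
    (hb : ∀ j, ∀ d ∈ C j, β j d ≤ β j (a j)) (j : Fin n) (x c : M) (hc : c ∈ C j)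
    (hne : g W β C a j x c ≠ c) :
    (if x = c then W j else 0) + (β j c : ℝ) <
      (if x = g W β C a j x c then W j else 0) + (β j (g W β C a j x c) : ℝ) := by
  have h0 := hW j
  have h1 : (β j c : ℝ) ≤ β j (a j) := by exact_mod_cast hb j c hc
  by_cases hS : x ∈ C j ∧ (β j (a j) : ℝ) < W j + β j x
  · have e : g W β C a j x c = x := by unfold g; rw [if_pos hS]
    rw [e] at hne ⊢
    rw [if_pos rfl, if_neg hne]; linarith [hS.2]
  · by_cases h2 : (β j (a j) : ℝ) ≤ (if x = c then W j else 0) + β j c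
    · have e : g W β C a j x c = c := by unfold g; rw [if_neg hS, if_pos h2]
      exact absurd e hne
    · have e : g W β C a j x c = a j := by unfold g; rw [if_neg hS, if_neg h2]
      rw [e]
      push Not at h2
      have : (0:ℝ) ≤ (if x = a j then W j else 0) := by split_ifs <;> linarith
      linarith

/-- Node visited at time `t`. -/
def node (n : ℕ) [NeZero n] (t : ℕ) : Fin n := ⟨t % n, Nat.mod_lt _ (Nat.pos_of_neZero n)⟩

/-- Predecessor on the cycle. -/
def pr (n : ℕ) [NeZero n] (i : Fin n) : Fin n :=
  ⟨(i.val + (n - 1)) % n, Nat.mod_lt _ (Nat.pos_of_neZero n)⟩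

theorem node_add (n : ℕ) [NeZero n] (t : ℕ) : node n (t + n) = node n t := by
  simp [node]

theorem node_ne (n : ℕ) [NeZero n] {t t' : ℕ} (h : t < t') (h' : t' < t + n) :
    node n t ≠ node n t' := by
  intro e
  have e1 : t % n = t' % n := congrArg Fin.val e
  have e2 : n ∣ t' - t := (Nat.modEq_iff_dvd' h.le).mp e1
  have := Nat.le_of_dvd (by omega) e2
  omega

theorem node_mul (n : ℕ) [NeZero n] (k : ℕ) (i : Fin n) : node n (k * n + i.val) = i := by
  apply Fin.ext
  simp [node, Nat.mod_eq_of_lt i.isLt]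

theorem pr_node (n : ℕ) [NeZero n] (t : ℕ) : pr n (node n (t + 1)) = node n t := by
  apply Fin.ext
  have hn := Nat.pos_of_neZero n
  simp only [pr, node, Nat.mod_add_mod]
  rw [show t + 1 + (n - 1) = t + n by omega, Nat.add_mod_right]

theorem adj_iff (n : ℕ) [NeZero n] (j i : Fin n) : cycAdj n j i ↔ j = pr n i := by
  have h1 : ∃ t, i = node n (t + 1) := by
    refine ⟨n + i.val - 1, ?_⟩
    have hn := Nat.pos_of_neZero n
    have := node_mul n 1 i
    rw [show n + i.val - 1 + 1 = 1 * n + i.val by omega, this]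
  obtain ⟨t, rfl⟩ := h1
  rw [pr_node]
  have h2 := node_mul n 0 j
  simp only [zero_mul, zero_add] at h2
  constructor
  · intro h
    rw [← pr_node, ← h2, ← pr_node n j.val]
    congr 1
    apply Fin.ext
    simpa [cycAdj, node] using h
  · rintro rfl
    simp [cycAdj, node]

theorem payoff_eq_s5 {n : ℕ} [NeZero n] {M : Type} (w : Fin n → Fin n → ℝ) (β : Fin n → M → ℕ)
    (s : Fin n → M) (i : Fin n) :
    payoff (cycAdj n) w β s i =
      (if s (pr n i) = s i then w (pr n i) i else 0) + (β i (s i) : ℝ) := by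
  unfold payoff
  congr 1
  by_cases h : s (pr n i) = s i
  · rw [if_pos h]
    have : Finset.univ.filter (fun j => cycAdj n j i ∧ s j = s i) = {pr n i} := by
      ext j
      simp only [Finset.mem_filter, Finset.mem_univ, true_and, Finset.mem_singleton, adj_iff]
      constructor
      · exact fun h => h.1
      · rintro rfl; exact ⟨rfl, h⟩
    rw [this, Finset.sum_singleton]
  · rw [if_neg h]
    apply Finset.sum_eq_zero
    intro j hj
    simp only [Finset.mem_filter, Finset.mem_univ, true_and, adj_iff] at hj
    obtain ⟨rfl, h2⟩ := hj
    exact absurd h2 h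

theorem compress {X : Type} (R : X → X → Prop) (σ : ℕ → X) (T : ℕ)
    (h : ∀ t, t < T → σ (t + 1) = σ t ∨ R (σ t) (σ (t + 1))) :
    ∃ L, L ≤ T ∧ ∃ τ : ℕ → X, τ 0 = σ 0 ∧ τ L = σ T ∧ ∀ t, t < L → R (τ t) (τ (t + 1)) := by
  induction T with
  | zero => exact ⟨0, le_rfl, σ, rfl, rfl, by simp⟩
  | succ T ih =>
    obtain ⟨L, hL, τ, h0, h1, h2⟩ := ih (fun t ht => h t (by omega))
    rcases h T (by omega) with e | e
    · exact ⟨L, by omega, τ, h0, by rw [h1, e], h2⟩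
    · refine ⟨L + 1, by omega, fun t => if t ≤ L then τ t else σ (T + 1), by simp [h0], by simp, ?_⟩
      intro t ht
      by_cases h3 : t < L
      · have := h2 t h3
        simpa [h3.le, Nat.succ_le_of_lt h3] using this
      · have : t = L := by omega
        subst this
        simpa [h1] using e

theorem const_seg {M : Type} (v : ℕ → M) (x : ℕ) (d : ℕ)
    (h : ∀ t, x < t → t ≤ x + d → v t = v (t - 1)) : v (x + d) = v x := by
  induction d with
  | zero => rfl
  | succ d ih =>
    rw [h (x + (d + 1)) (by omega) (by omega)]
    exact ih (fun t h1 h2 => h t h1 (by omega))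

theorem dyn {n : ℕ} [NeZero n] (hn : 2 ≤ n) {M : Type} (W : Fin n → ℝ) (hW : ∀ j, 0 ≤ W j)
    (β : Fin n → M → ℕ) (C : Fin n → Finset M) (a : Fin n → M) (e f : Fin n)
    (hef : e.val < f.val)
    (ord : ∀ j, j ≠ e → j ≠ f → ∀ x ∈ C j, (β j (a j) : ℝ) < W j + β j x → β j (a j) ≤ β j x)
    (v : ℕ → M)
    (hv : ∀ t, v (t + n) = g W β C a (node n t) (v (t + n - 1)) (v t)) :
    ∃ t, n ≤ t ∧ t ≤ 9 * n ∧ v (t + n) = v t := by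
  by_contra hcon
  push Not at hcon
  have h1 : ∀ t, n ≤ t → t ≤ 9 * n →
      (v (t + n) = v (t + n - 1) ∧ v (t + n) ∈ C (node n t) ∧
        (β (node n t) (a (node n t)) : ℝ) < W (node n t) + β (node n t) (v (t + n))) ∨
      (v (t + n) = a (node n t) ∧ ¬ (β (node n t) (a (node n t)) : ℝ) ≤
        (if v (t + n - 1) = v t then W (node n t) else 0) + β (node n t) (v t)) := by
    intro t ht ht'
    have hk := hcon t ht ht'
    have hh := hv t
    unfold g at hh
    by_cases c1 : v (t + n - 1) ∈ C (node n t) ∧ (β (node n t) (a (node n t)) : ℝ) <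
        W (node n t) + β (node n t) (v (t + n - 1))
    · rw [if_pos c1] at hh
      left; rw [hh]; exact ⟨rfl, c1⟩
    · rw [if_neg c1] at hh
      by_cases c2 : (β (node n t) (a (node n t)) : ℝ) ≤
          (if v (t + n - 1) = v t then W (node n t) else 0) + β (node n t) (v t)
      · rw [if_pos c2] at hh; exact absurd hh hk
      · rw [if_neg c2] at hh; exact Or.inr ⟨hh, c2⟩
  have h2 : ∀ t, 2 * n ≤ t → t ≤ 9 * n → node n t ≠ e → node n t ≠ f →
      v (t + n) = v (t + n - 1) := by
    intro t ht ht' he hf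
    have hA : β (node n t) (a (node n t)) ≤ β (node n t) (v t) := by
      have := h1 (t - n) (by omega) (by omega)
      have hnode : node n (t - n) = node n t := by
        rw [← node_add n (t - n), Nat.sub_add_cancel (by omega)]
      rw [hnode, Nat.sub_add_cancel (by omega : n ≤ t)] at this
      rcases this with ⟨_, q1, q2⟩ | ⟨q, _⟩
      · exact ord _ he hf _ q1 q2
      · rw [q]
    rcases h1 t (by omega) ht' with q | ⟨_, q⟩
    · exact q.1
    · exfalso
      apply q
      have : (β (node n t) (a (node n t)) : ℝ) ≤ β (node n t) (v t) := by exact_mod_cast hA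
      have h0 := hW (node n t)
      split_ifs <;> linarith
  have h2' : ∀ t, 3 * n ≤ t → t ≤ 9 * n → node n t ≠ e → node n t ≠ f → v t = v (t - 1) := by
    intro t ht ht' he hf
    have hnode : node n (t - n) = node n t := by
      rw [← node_add n (t - n), Nat.sub_add_cancel (by omega)]
    have := h2 (t - n) (by omega) (by omega) (by rwa [hnode]) (by rwa [hnode])
    rwa [Nat.sub_add_cancel (by omega : n ≤ t)] at this
  have h1' : ∀ t, 3 * n ≤ t → t ≤ 9 * n → v t = v (t - 1) ∨ v t = a (node n t) := by
    intro t ht ht'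
    have hnode : node n (t - n) = node n t := by
      rw [← node_add n (t - n), Nat.sub_add_cancel (by omega)]
    have := h1 (t - n) (by omega) (by omega)
    rw [hnode, Nat.sub_add_cancel (by omega : n ≤ t)] at this
    rcases this with q | q
    · exact Or.inl q.1
    · exact Or.inr q.1
  have heL := e.isLt
  have hfL := f.isLt
  have nE : ∀ k, node n (k * n + e.val) = e := fun k => node_mul n k e
  have nF : ∀ k, node n (k * n + f.val) = f := fun k => node_mul n k f
  have A1 : ∀ k, 3 ≤ k → k ≤ 7 → v (k * n + f.val) = v (k * n + e.val) ∨
      v (k * n + f.val) = a f := by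
    intro k hk hk'
    have b1 : 3 * n ≤ k * n := Nat.mul_le_mul_right n hk
    have b2 : k * n ≤ 7 * n := Nat.mul_le_mul_right n hk'
    have := h1' (k * n + f.val) (by omega) (by omega)
    rw [nF] at this
    rcases this with q | q
    · left
      rw [q]
      have := const_seg v (k * n + e.val) (f.val - 1 - e.val) (by
        intro t ht ht'
        apply h2' t (by omega) (by omega)
        · have := node_ne n (t := k * n + e.val) (t' := t) (by omega) (by omega)
          rw [nE] at this; exact this.symm
        · have := node_ne n (t := t) (t' := k * n + f.val) (by omega) (by omega)
          rwa [nF] at this)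
      rw [← this]; congr 1; omega
    · right; exact q
  have A2 : ∀ k, 3 ≤ k → k ≤ 7 → v ((k + 1) * n + e.val) = v (k * n + f.val) ∨
      v ((k + 1) * n + e.val) = a e := by
    intro k hk hk'
    have b1 : 3 * n ≤ k * n := Nat.mul_le_mul_right n hk
    have b2 : k * n ≤ 7 * n := Nat.mul_le_mul_right n hk'
    have b3 : (k + 1) * n = k * n + n := by ring
    have := h1' ((k + 1) * n + e.val) (by omega) (by omega)
    rw [nE] at this
    rcases this with q | q
    · left
      rw [q]
      have := const_seg v (k * n + f.val) (n + e.val - 1 - f.val) (by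
        intro t ht ht'
        apply h2' t (by omega) (by omega)
        · have := node_ne n (t := t) (t' := (k + 1) * n + e.val) (by omega) (by omega)
          rwa [nE] at this
        · have := node_ne n (t := k * n + f.val) (t' := t) (by omega) (by omega)
          rw [nF] at this; exact this.symm)
      rw [← this]; congr 1; omega
    · right; exact q
  have B : ∀ k, 3 ≤ k → k ≤ 7 → ∀ i : Fin n, v ((k + 1) * n + i.val) ≠ v (k * n + i.val) := by
    intro k hk hk' i
    have b1 : 3 * n ≤ k * n := Nat.mul_le_mul_right n hk
    have b2 : k * n ≤ 7 * n := Nat.mul_le_mul_right n hk'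
    have hi := i.isLt
    have := hcon (k * n + i.val) (by omega) (by omega)
    rwa [show k * n + i.val + n = (k + 1) * n + i.val by ring] at this
  have p3 := A1 3 (by norm_num) (by norm_num)
  have p4 := A1 4 (by norm_num) (by norm_num)
  have p5 := A1 5 (by norm_num) (by norm_num)
  have p6 := A1 6 (by norm_num) (by norm_num)
  have q3 := A2 3 (by norm_num) (by norm_num)
  have q4 := A2 4 (by norm_num) (by norm_num)
  have q5 := A2 5 (by norm_num) (by norm_num)
  have q6 := A2 6 (by norm_num) (by norm_num)
  have r3 := B 3 (by norm_num) (by norm_num) e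
  have r4 := B 4 (by norm_num) (by norm_num) e
  have r5 := B 5 (by norm_num) (by norm_num) e
  have r6 := B 6 (by norm_num) (by norm_num) e
  have s3 := B 3 (by norm_num) (by norm_num) f
  have s4 := B 4 (by norm_num) (by norm_num) f
  have s5 := B 5 (by norm_num) (by norm_num) f
  norm_num only at q3 q4 q5 q6 r3 r4 r5 r6 s3 s4 s5
  clear A1 A2 B h1' h2' h2 h1 hcon hv ord
  generalize v (3 * n + e.val) = E3 at *
  generalize v (4 * n + e.val) = E4 at *
  generalize v (5 * n + e.val) = E5 at *
  generalize v (6 * n + e.val) = E6 at *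
  generalize v (7 * n + e.val) = E7 at *
  generalize v (3 * n + f.val) = F3 at *
  generalize v (4 * n + f.val) = F4 at *
  generalize v (5 * n + f.val) = F5 at *
  generalize v (6 * n + f.val) = F6 at *
  grind

/-- The round-robin dynamics. -/
noncomputable def dynS {n : ℕ} [NeZero n] {M : Type} (W : Fin n → ℝ) (β : Fin n → M → ℕ)
    (C : Fin n → Finset M) (a : Fin n → M) (s : Fin n → M) : ℕ → Fin n → M
  | 0 => s
  | t + 1 => Function.update (dynS W β C a s t) (node n (t + 1))
      (g W β C a (node n (t + 1)) (dynS W β C a s t (node n t))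
        (dynS W β C a s t (node n (t + 1))))

/-- From any strategy, a Nash-like state is reached in linearly many steps. -/
theorem reach_nash {n : ℕ} [NeZero n] (hn : 2 ≤ n) {M : Type}
    (w : Fin n → Fin n → ℝ) (hw : ∀ i, 0 ≤ w (pr n i) i)
    (β : Fin n → M → ℕ) (C : Fin n → Finset M) (a : Fin n → M) (ha : ∀ j, a j ∈ C j)
    (hb : ∀ j, ∀ d ∈ C j, β j d ≤ β j (a j)) (e f : Fin n)
    (hef : e.val < f.val)
    (ord : ∀ j, j ≠ e → j ≠ f → ∀ x ∈ C j,
      (β j (a j) : ℝ) < w (pr n j) j + β j x → β j (a j) ≤ β j x)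
    (s : Fin n → M) (hs : Valid C s) :
    ∃ (σ : ℕ → Fin n → M) (T : ℕ), T ≤ 10 * n ∧ σ 0 = s ∧
      (∀ t, t < T → σ (t + 1) = σ t ∨ ProfDev (cycAdj n) w β C (σ t) (σ (t + 1))) ∧
      Valid C (σ T) ∧ ∀ i, ∀ d ∈ C i,
        (if σ T (pr n i) = d then w (pr n i) i else 0) + (β i d : ℝ) ≤
        (if σ T (pr n i) = σ T i then w (pr n i) i else 0) + (β i (σ T i) : ℝ) := by
  set W : Fin n → ℝ := fun i => w (pr n i) i with hWdef
  set σ := dynS W β C a s with hσ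
  have hstep : ∀ t, σ (t + 1) = Function.update (σ t) (node n (t + 1))
      (g W β C a (node n (t + 1)) (σ t (node n t)) (σ t (node n (t + 1)))) := fun t => rfl
  have hval : ∀ t, Valid C (σ t) := by
    intro t
    induction t with
    | zero => exact hs
    | succ t ih =>
      intro i
      rw [hstep]
      by_cases hi : i = node n (t + 1)
      · subst hi
        rw [Function.update_self]
        exact g_mem W β C a ha _ _ _ (ih _)
      · rw [Function.update_of_ne hi]; exact ih i
  have hkeep : ∀ t d, d < n → σ (t + d) (node n t) = σ t (node n t) := by
    intro t d hd
    induction d with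
    | zero => rfl
    | succ d ih =>
      rw [← add_assoc, hstep, Function.update_of_ne (node_ne n (by omega) (by omega))]
      exact ih (by omega)
  have hself : ∀ t, σ (t + 1) (node n (t + 1)) =
      g W β C a (node n (t + 1)) (σ t (node n t)) (σ t (node n (t + 1))) := by
    intro t; rw [hstep, Function.update_self]
  have hv : ∀ t, σ (t + n) (node n (t + n)) = g W β C a (node n t)
      (σ (t + n - 1) (node n (t + n - 1))) (σ t (node n t)) := by
    intro t
    have := hself (t + n - 1)
    rw [Nat.sub_add_cancel (by omega : 1 ≤ t + n)] at this
    rw [this, node_add]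
    congr 1
    have := hkeep t (n - 1) (by omega)
    rwa [show t + (n - 1) = t + n - 1 by omega] at this
  obtain ⟨t, ht1, ht2, ht3⟩ := dyn hn W hw β C a e f hef ord (fun t => σ t (node n t)) hv
  refine ⟨σ, t + n - 1, by omega, rfl, ?_, hval _, ?_⟩
  · intro t _
    by_cases hc : g W β C a (node n (t + 1)) (σ t (node n t)) (σ t (node n (t + 1))) =
        σ t (node n (t + 1))
    · left; rw [hstep, hc, Function.update_eq_self]
    · right
      refine ⟨hval _, ?_, ?_⟩
      · intro h
        have := congrFun h (node n (t + 1))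
        rw [hself] at this
        exact hc this.symm
      · intro i hi
        have hi' : i = node n (t + 1) := by
          by_contra hne
          apply hi
          rw [hstep, Function.update_of_ne hne]
        subst hi'
        have hp : σ (t + 1) (node n t) = σ t (node n t) := by
          rw [hstep, Function.update_of_ne (node_ne n (by omega) (by omega))]
        rw [payoff_eq_s5, payoff_eq_s5, pr_node, hp, hself]
        have := g_strict W hw β C a hb (node n (t + 1)) (σ t (node n t)) (σ t (node n (t + 1)))
          (hval t _) hc
        simpa only [hWdef, pr_node] using this
  · intro i d hd
    -- each node is node r for some r in [t, t+n)
    have hr : ∃ r, t ≤ r ∧ r < t + n ∧ i = node n r := by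
      have e1 := node_mul n (t / n) i
      have e2 := node_mul n (t / n + 1) i
      have e3 := Nat.div_add_mod' t n
      have e4 := Nat.mod_lt t (by omega : n > 0)
      have e5 : (t / n + 1) * n = t / n * n + n := by ring
      have := i.isLt
      by_cases h : t ≤ t / n * n + i.val
      · exact ⟨_, h, by omega, e1.symm⟩
      · exact ⟨_, by omega, by omega, e2.symm⟩
    obtain ⟨r, hr1, hr2, rfl⟩ := hr
    rcases Nat.eq_or_lt_of_le hr1 with h | h
    · subst h
      have hp : pr n (node n t) = node n (t + n - 1) := by
        rw [← node_add, ← pr_node n (t + n - 1), Nat.sub_add_cancel (by omega : 1 ≤ t + n)]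
      have hk := hkeep t (n - 1) (by omega)
      rw [show t + (n - 1) = t + n - 1 by omega] at hk
      have := g_best W hw β C a hb (node n t) (σ (t + n - 1) (node n (t + n - 1)))
        (σ t (node n t)) d hd
      rw [← hv t] at this
      rw [ht3] at this
      simp only [hWdef, hp] at this
      rw [hp, hk]
      exact this
    · obtain ⟨q, rfl⟩ : ∃ q, r = q + 1 := ⟨r - 1, by omega⟩
      have hk1 := hkeep (q + 1) (t + n - 1 - (q + 1)) (by omega)
      have hk2 := hkeep q (t + n - 1 - q) (by omega)
      rw [show q + 1 + (t + n - 1 - (q + 1)) = t + n - 1 by omega] at hk1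
      rw [show q + (t + n - 1 - q) = t + n - 1 by omega] at hk2
      have := g_best W hw β C a hb (node n (q + 1)) (σ q (node n q))
        (σ q (node n (q + 1))) d hd
      rw [← hself] at this
      simp only [hWdef, pr_node] at this
      rw [pr_node, hk1, hk2]
      exact this

/-- Any profitable deviation from a Nash state is monochromatic. -/
theorem mono_dev {n : ℕ} [NeZero n] {M : Type}
    (w : Fin n → Fin n → ℝ) (hw : ∀ i, 0 ≤ w (pr n i) i)
    (β : Fin n → M → ℕ) (C : Fin n → Finset M) (s s' : Fin n → M)
    (hN : ∀ i, ∀ d ∈ C i,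
        (if s (pr n i) = d then w (pr n i) i else 0) + (β i d : ℝ) ≤ payoff (cycAdj n) w β s i)
    (h : ProfDev (cycAdj n) w β C s s') :
    (∀ i, s i ≠ s' i) ∧ ∃ c, s' = fun _ => c := by
  obtain ⟨hv, hne, hp⟩ := h
  have key : ∀ i, s i ≠ s' i → s (pr n i) ≠ s' (pr n i) ∧ s' (pr n i) = s' i := by
    intro i hi
    have h1 := hp i hi
    have h2 := hN i (s' i) (hv i)
    rw [payoff_eq_s5 w β s' i] at h1
    have h0 := hw i
    constructor
    · intro h; rw [h] at h2; linarith
    · by_contra h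
      rw [if_neg h] at h1
      split_ifs at h2 <;> linarith
  obtain ⟨i0, hi0⟩ := Function.ne_iff.mp hne
  have all : ∀ d t, node n (t + d) = i0 → s (node n t) ≠ s' (node n t) ∧ s' (node n t) = s' i0 := by
    intro d
    induction d with
    | zero => intro t ht; rw [add_zero] at ht; rw [ht]; exact ⟨hi0, rfl⟩
    | succ d ih =>
      intro t ht
      have := ih (t + 1) (by rw [← ht]; congr 1; omega)
      have h2 := key _ this.1
      rw [pr_node] at h2
      exact ⟨h2.1, h2.2.trans this.2⟩
  have all' : ∀ i, s i ≠ s' i ∧ s' i = s' i0 := by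
    intro i
    have e1 := node_mul n 0 i
    have e2 := node_mul n 1 i0
    have := i.isLt
    have := all (1 * n + i0.val - (0 * n + i.val)) (0 * n + i.val) (by
      rw [Nat.add_sub_cancel' (by omega)]; exact e2)
    rwa [e1] at this
  exact ⟨fun i => (all' i).1, s' i0, funext fun i => (all' i).2⟩

theorem nash_strong {n : ℕ} [NeZero n] {M : Type} [Fintype M]
    (w : Fin n → Fin n → ℝ) (hw : ∀ i, 0 ≤ w (pr n i) i)
    (β : Fin n → M → ℕ) (C : Fin n → Finset M) (s : Fin n → M) (hs : Valid C s)
    (hN : ∀ i, ∀ d ∈ C i,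
        (if s (pr n i) = d then w (pr n i) i else 0) + (β i d : ℝ) ≤ payoff (cycAdj n) w β s i) :
    ∃ s', (s' = s ∨ ProfDev (cycAdj n) w β C s s') ∧ IsStrong (cycAdj n) w β C s' := by
  by_cases hst : IsStrong (cycAdj n) w β C s
  · exact ⟨s, Or.inl rfl, hst⟩
  have hex : ∃ c, ProfDev (cycAdj n) w β C s (fun _ => c) := by
    by_contra hno
    apply hst
    refine ⟨hs, fun s' h => ?_⟩
    obtain ⟨_, c, rfl⟩ := mono_dev w hw β C s s' hN h
    exact hno ⟨c, h⟩
  let i0 : Fin n := node n 0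
  obtain ⟨c, hc, hmax⟩ := Finset.exists_max_image
    (Finset.univ.filter fun c => ProfDev (cycAdj n) w β C s (fun _ => c)) (fun c => β i0 c)
    (by obtain ⟨c, hc⟩ := hex; exact ⟨c, by simpa using hc⟩)
  have hc' : ProfDev (cycAdj n) w β C s (fun _ => c) := by simpa using hc
  refine ⟨fun _ => c, Or.inr hc', hc'.1, fun s'' h => ?_⟩
  have hall := (mono_dev w hw β C s _ hN hc').1
  have himp : ∀ i, payoff (cycAdj n) w β s i < payoff (cycAdj n) w β (fun _ => c) i :=
    fun i => hc'.2.2 i (hall i)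
  have hN' : ∀ i, ∀ d ∈ C i, (if (fun _ => c : Fin n → M) (pr n i) = d then w (pr n i) i else 0)
      + (β i d : ℝ) ≤ payoff (cycAdj n) w β (fun _ => c) i := by
    intro i d hd
    by_cases hcd : c = d
    · subst hcd; rw [payoff_eq_s5]
    · have h1 := hN i d hd
      have h2 := himp i
      have h0 := hw i
      simp only [hcd, if_false]
      have : (β i d : ℝ) ≤ payoff (cycAdj n) w β s i := by
        split_ifs at h1 <;> linarith
      linarith
  obtain ⟨hall2, c', rfl⟩ := mono_dev w hw β C _ s'' hN' h
  have himp2 : ∀ i, payoff (cycAdj n) w β (fun _ => c) i < payoff (cycAdj n) w β (fun _ => c') i :=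
    fun i => h.2.2 i (hall2 i)
  have hdev : ProfDev (cycAdj n) w β C s (fun _ => c') := by
    refine ⟨h.1, ?_, fun i _ => (himp i).trans (himp2 i)⟩
    intro he
    have h1 := (himp i0).trans (himp2 i0)
    rw [he] at h1
    exact lt_irrefl _ h1
  have h3 := hmax c' (by simpa using hdev)
  have h4 := himp2 i0
  rw [payoff_eq_s5, payoff_eq_s5] at h4
  simp only [if_true] at h4
  have h5 : (β i0 c : ℝ) < β i0 c' := by linarith
  have h6 : β i0 c < β i0 c' := by exact_mod_cast h5
  omega

theorem main_aux {n : ℕ} [NeZero n] (hn : 2 ≤ n) {M : Type} [Fintype M]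
    (w : Fin n → Fin n → ℝ) (hw : ∀ i, 0 ≤ w (pr n i) i)
    (β : Fin n → M → ℕ) (C : Fin n → Finset M) (hC : ∀ i, (C i).Nonempty) (e f : Fin n)
    (ord : ∀ j, j ≠ e → j ≠ f → ∀ x ∈ C j, ∀ b ∈ C j,
      (β j b : ℝ) < w (pr n j) j + β j x → β j b ≤ β j x)
    (s : Fin n → M) (hs : Valid C s) :
    ∃ L, L ≤ 11 * n ∧ CImpPath (cycAdj n) w β C s L := by
  have hmx : ∀ j, ∃ b ∈ C j, ∀ d ∈ C j, β j d ≤ β j b :=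
    fun j => Finset.exists_max_image (C j) (β j) (hC j)
  choose a ha hb using hmx
  obtain ⟨e', f', hef, hcov⟩ : ∃ e' f' : Fin n, e'.val < f'.val ∧
      ∀ j, j ≠ e' → j ≠ f' → j ≠ e ∧ j ≠ f := by
    rcases lt_trichotomy e.val f.val with h | h | h
    · exact ⟨e, f, h, fun j h1 h2 => ⟨h1, h2⟩⟩
    · have hh : e = f := Fin.ext h
      subst hh
      by_cases h0 : e.val = 0
      · exact ⟨e, ⟨1, by omega⟩, by simp [h0], fun j h1 _ => ⟨h1, h1⟩⟩
      · exact ⟨⟨0, by omega⟩, e, Nat.pos_of_ne_zero h0, fun j _ h1 => ⟨h1, h1⟩⟩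
    · exact ⟨f, e, h, fun j h1 h2 => ⟨h2, h1⟩⟩
  obtain ⟨σ, T, hT, h0, hst, hval, hN⟩ := reach_nash hn w hw β C a ha hb e' f' hef
    (fun j h1 h2 x hx hlt => ord j (hcov j h1 h2).1 (hcov j h1 h2).2 x hx (a j) (ha j) hlt) s hs
  obtain ⟨s', hs', hstrong⟩ := nash_strong w hw β C (σ T) hval
    (fun i d hd => by rw [payoff_eq_s5]; exact hN i d hd)
  obtain ⟨L, hL, τ, t0, tL, tst⟩ := compress (ProfDev (cycAdj n) w β C)
    (fun t => if t ≤ T then σ t else s') (T + 1) (by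
      intro t ht
      by_cases h : t < T
      · simpa [h.le, Nat.succ_le_of_lt h] using hst t h
      · have : t = T := by omega
        subst this
        simpa using hs')
  refine ⟨L, by omega, τ, ?_, tst, ?_⟩
  · rw [t0]; simpa using h0
  · rw [tL]; simpa using hstrong

end helpers

/-- There is a constant `c` such that every coordination game on a weighted
simple cycle on `n` nodes with at most two nodes having a non-zero bonus, and
every coordination game with arbitrary bonuses on a simple cycle on `n` nodes
with at most two edges of weight different from `1`, admits, from every joint
strategy, a finite c-improvement path of length at most `c * n` ending in a
strong equilibrium. -/
theorem cycle_cimprovement_path_corollary :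
    ∃ c : ℕ,
      (∀ (n : ℕ), 2 ≤ n →
        ∀ (M : Type) [Fintype M],
        ∀ (w : Fin n → Fin n → ℝ), (∀ i j, cycAdj n i j → 0 ≤ w i j) →
        ∀ (β : Fin n → M → ℕ),
          (∃ a b : Fin n, ∀ i, (∃ col, β i col ≠ 0) → i = a ∨ i = b) →
        ∀ (C : Fin n → Finset M), (∀ i, (C i).Nonempty) →
        ∀ s : Fin n → M, Valid C s →
          ∃ L, L ≤ c * n ∧ CImpPath (cycAdj n) w β C s L) ∧
      (∀ (n : ℕ), 2 ≤ n →
        ∀ (M : Type) [Fintype M],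
        ∀ (w : Fin n → Fin n → ℝ), (∀ i j, cycAdj n i j → 0 ≤ w i j) →
          (∃ a b : Fin n, ∀ i j, cycAdj n i j → w i j ≠ 1 → i = a ∨ i = b) →
        ∀ (β : Fin n → M → ℕ),
        ∀ (C : Fin n → Finset M), (∀ i, (C i).Nonempty) →
        ∀ s : Fin n → M, Valid C s →
          ∃ L, L ≤ c * n ∧ CImpPath (cycAdj n) w β C s L) := by
  refine ⟨11, ?_, ?_⟩
  · intro n hn M _ w hw β hβ C hC s hs
    obtain ⟨e, f, hef⟩ := hβ
    haveI : NeZero n := ⟨by omega⟩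
    refine main_aux hn w (fun i => hw _ _ ((adj_iff n _ _).2 rfl)) β C hC e f ?_ s hs
    intro j h1 h2 x _ b _ _
    have hz : ∀ col, β j col = 0 := by
      intro col
      by_contra hne
      rcases hef j ⟨col, hne⟩ with h | h
      · exact h1 h
      · exact h2 h
    rw [hz, hz]
  · intro n hn M _ w hw hex β C hC s hs
    obtain ⟨p, q, hpq⟩ := hex
    haveI : NeZero n := ⟨by omega⟩
    have hpr : ∀ j i : Fin n, pr n j = i → j = node n (i.val + 1) := by
      intro j i h
      have := (adj_iff n i j).2 h.symm
      exact Fin.ext this.symm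
    refine main_aux hn w (fun i => hw _ _ ((adj_iff n _ _).2 rfl)) β C hC
      (node n (p.val + 1)) (node n (q.val + 1)) ?_ s hs
    intro j h1 h2 x _ b _ hlt
    have hw1 : w (pr n j) j = 1 := by
      by_contra hne
      rcases hpq _ j ((adj_iff n _ _).2 rfl) hne with h | h
      · exact h1 (hpr _ _ h)
      · exact h2 (hpr _ _ h)
    rw [hw1] at hlt
    have : β j b < 1 + β j x := by exact_mod_cast hlt
    omega

end CG
end
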